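/- Every tree containing exactly two vertices of degree at least 3 is antimagic, i.e. it admits a bijective edge labeling f : E → {1,2,...,|E|} such that the vertex sums φ_f(u) = Σ_{e incident to u} f(e) are pairwise distinct over all vertices. -/

import Mathlib

open Classical

noncomputable section

/-- The vertex sum at `u` of an edge labeling `f`: the sum of the labels of the
edges incident to `u`. -/
def vertexSum {V : Type*} [Fintype V] (G : SimpleGraph V) (f : Sym2 V → ℕ) (u : V) : ℕ :=
  ∑ e ∈ G.incidenceFinset u, f e

/-- `f` is an antimagic labeling of `G`: it is a bijection from the edge set of `G`
onto `{1, …, |E|}` and the vertex sums are pairwise distinct. -/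
def IsAntimagicLabeling {V : Type*} [Fintype V] (G : SimpleGraph V)
    (f : Sym2 V → ℕ) : Prop :=
  Set.BijOn f G.edgeSet (Set.Icc 1 G.edgeFinset.card) ∧
  Function.Injective (vertexSum G f)

/-- `f` is a strongly antimagic labeling of `G`: it is an antimagic labeling and moreover
`deg u < deg v` implies `vertexSum u < vertexSum v`. -/
def IsStronglyAntimagicLabeling {V : Type*} [Fintype V] (G : SimpleGraph V)
    (f : Sym2 V → ℕ) : Prop :=
  Set.BijOn f G.edgeSet (Set.Icc 1 G.edgeFinset.card) ∧
  Function.Injective (vertexSum G f) ∧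
  ∀ u v : V, G.degree u < G.degree v → vertexSum G f u < vertexSum G f v

/-- `G` is antimagic if it admits an antimagic labeling. -/
def IsAntimagic {V : Type*} [Fintype V] (G : SimpleGraph V) : Prop :=
  ∃ f : Sym2 V → ℕ, IsAntimagicLabeling G f

/-- `G` is strongly antimagic if it admits a strongly antimagic labeling. -/
def IsStronglyAntimagic {V : Type*} [Fintype V] (G : SimpleGraph V) : Prop :=
  ∃ f : Sym2 V → ℕ, IsStronglyAntimagicLabeling G f

set_option linter.unusedSectionVars false
set_option linter.unusedVariables false

/-- The rank of `e` inside `E` with respect to a key `K`. -/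
def rk {β α : Type*} [LinearOrder α] (E : Finset β) (K : β → α) (e : β) : ℕ :=
  (E.filter (fun e' => K e' ≤ K e)).card

section rank
variable {β α : Type*} [LinearOrder α] {E : Finset β} {K : β → α}

lemma rk_lt {e e' : β} (he' : e' ∈ E) (h : K e < K e') : rk E K e < rk E K e' := by
  apply Finset.card_lt_card
  rw [Finset.ssubset_iff_of_subset]
  · refine ⟨e', by simp [he'], by simp [h]⟩
  · intro x hx
    simp only [Finset.mem_filter] at hx ⊢
    exact ⟨hx.1, hx.2.trans h.le⟩

lemma rk_add (e : β) : rk E K e + (E.filter (fun e' => K e < K e')).card = E.card := by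
  rw [← Finset.card_filter_add_card_filter_not (s := E) (fun e' => K e' ≤ K e)]
  simp [rk, not_le]

lemma rk_le (e : β) : rk E K e ≤ E.card := by
  have := rk_add (E := E) (K := K) e
  omega

lemma rk_pos {e : β} (he : e ∈ E) : 1 ≤ rk E K e := by
  apply Finset.card_pos.2
  exact ⟨e, by simp [he]⟩

lemma rk_inj (hK : Set.InjOn K E) : Set.InjOn (rk E K) E := by
  intro a ha b hb h
  rcases lt_trichotomy (K a) (K b) with h' | h' | h'
  · exact absurd h (rk_lt hb h').ne
  · exact hK ha hb h'
  · exact absurd h (rk_lt ha h').ne'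

lemma rk_lt_iff (hK : Set.InjOn K E) {e e' : β} (he : e ∈ E) (he' : e' ∈ E) :
    rk E K e < rk E K e' ↔ K e < K e' := by
  constructor
  · intro h
    by_contra h'
    rcases lt_or_eq_of_le (not_lt.1 h') with h'' | h''
    · exact absurd (rk_lt he h'') (by omega)
    · rw [hK he' he h''] at h
      omega
  · exact rk_lt he'

lemma rk_bijOn (hK : Set.InjOn K E) : Set.BijOn (rk E K) E (Set.Icc 1 E.card) := by
  have hm : Set.MapsTo (rk E K) E (Set.Icc 1 E.card) := fun e he => ⟨rk_pos he, rk_le e⟩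
  refine ⟨hm, rk_inj hK, ?_⟩
  have := Finset.surjOn_of_injOn_of_card_le (s := E) (t := Finset.Icc 1 E.card) (rk E K)
    (by simpa using hm) (rk_inj hK) (by simp)
  simpa using this

/-- If all elements above `e` lie in `S`, the rank of `e` is large. -/
lemma rk_ge_of_above {e : β} (S : Finset β) (h : ∀ e' ∈ E, K e < K e' → e' ∈ S) :
    E.card ≤ rk E K e + S.card := by
  have h1 := rk_add (E := E) (K := K) e
  have h2 : (E.filter (fun e' => K e < K e')).card ≤ S.card := by
    apply Finset.card_le_card
    intro x hx
    simp only [Finset.mem_filter] at hx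
    exact h x hx.1 hx.2
  omega

lemma rk_above_le {e : β} (S : Finset β) (h : ∀ e' ∈ S, e' ∈ E ∧ K e < K e') :
    rk E K e + S.card ≤ E.card := by
  have h1 := rk_add (E := E) (K := K) e
  have h2 : S.card ≤ (E.filter (fun e' => K e < K e')).card := by
    apply Finset.card_le_card
    intro x hx
    simp only [Finset.mem_filter]
    exact h x hx
  omega

/-- An injection from the elements above `r` into those below `z`. -/
lemma rk_add_ge {r z : β} (hz : z ∈ E) (φ : β → β)
    (hφ : ∀ e ∈ E, K r < K e → φ e ∈ E ∧ K (φ e) < K z)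
    (hinj : ∀ e ∈ E, ∀ e' ∈ E, K r < K e → K r < K e' → φ e = φ e' → e = e') :
    E.card + 1 ≤ rk E K r + rk E K z := by
  have h1 := rk_add (E := E) (K := K) r
  have h2 : (E.filter (fun e' => K r < K e')).card
      ≤ ((E.filter (fun e' => K e' ≤ K z)).erase z).card := by
    apply Finset.card_le_card_of_injOn φ
    · intro x hx
      simp only [Finset.coe_filter, Set.mem_ofPred_eq] at hx
      obtain ⟨h3, h4⟩ := hφ x hx.1 hx.2
      simp only [Finset.coe_erase, Finset.coe_filter, Set.mem_sdiff, Set.mem_ofPred_eq, Set.mem_singleton_iff]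
      refine ⟨⟨h3, h4.le⟩, ?_⟩
      intro h5
      rw [h5] at h4
      exact lt_irrefl _ h4
    · intro x hx y hy
      simp only [Finset.coe_filter, Set.mem_ofPred_eq] at hx hy
      exact hinj x hx.1 y hy.1 hx.2 hy.2
  rw [Finset.card_erase_of_mem (by simp [hz])] at h2
  have h3 := rk_pos (K := K) hz
  simp only [rk] at *
  omega

end rank

/-! ### The combinatorial model -/

section model
variable {C : Type*} [Fintype C]

/-- the edges -/
def EE (len : C → ℕ) : Finset (C × ℕ) :=
  (Finset.univ.sigma fun c => Finset.range (len c)).map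
    ⟨fun x : (Σ _ : C, ℕ) => (x.1, x.2), by
      rintro ⟨a, b⟩ ⟨c, d⟩ h
      simp only [Prod.mk.injEq] at h
      obtain ⟨rfl, rfl⟩ := h
      rfl⟩

@[simp] lemma mem_EE {len : C → ℕ} {e : C × ℕ} : e ∈ EE len ↔ e.2 < len e.1 := by
  obtain ⟨c, i⟩ := e
  simp only [EE, Finset.mem_map, Finset.mem_sigma, Finset.mem_univ, true_and, Finset.mem_range]
  constructor
  · rintro ⟨⟨a, b⟩, h, h'⟩
    have h1 : a = c := congrArg Prod.fst h'
    have h2 : b = i := congrArg Prod.snd h'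
    subst h1 h2
    exact h
  · intro h
    exact ⟨⟨c, i⟩, h, rfl⟩

lemma card_EE (len : C → ℕ) : (EE len).card = ∑ c, len c := by
  simp [EE]

/-- The sum at the center `b`, where the central path contributes its `j`-th edge. -/
def cs (p : C) (len : C → ℕ) (side : C → Bool) (g : C × ℕ → ℕ) (b : Bool) (j : ℕ) : ℕ :=
  g (p, j) + ∑ c ∈ Finset.univ.filter (fun c => c ≠ p ∧ side c = b), g (c, len c - 1)

/-- leaves are smaller than pairs, pairs are distinct -/
structure PairOK (p : C) (len : C → ℕ) (g : C × ℕ → ℕ) : Prop where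
  bij : Set.BijOn g (EE len) (Set.Icc 1 (∑ c, len c))
  leaf : ∀ c, c ≠ p → ∀ c' i, i + 1 < len c' → g (c, 0) < g (c', i) + g (c', i + 1)
  pair : ∀ c i c' i', i + 1 < len c → i' + 1 < len c' →
    g (c, i) + g (c, i + 1) = g (c', i') + g (c', i' + 1) → c = c' ∧ i = i'

structure Good (p : C) (len : C → ℕ) (side : C → Bool) (g : C × ℕ → ℕ) : Prop where
  ok : PairOK p len g
  leaft : ∀ c, c ≠ p → g (c, 0) < cs p len side g true 0
  leaff : ∀ c, c ≠ p → g (c, 0) < cs p len side g false (len p - 1)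
  pairt : ∀ c i, i + 1 < len c → g (c, i) + g (c, i + 1) ≠ cs p len side g true 0
  pairf : ∀ c i, i + 1 < len c → g (c, i) + g (c, i + 1) ≠ cs p len side g false (len p - 1)
  ne : cs p len side g true 0 ≠ cs p len side g false (len p - 1)

end model

section model
variable {C : Type*} [Fintype C]

/-- reverse the central path -/
def revp (p : C) (len : C → ℕ) (e : C × ℕ) : C × ℕ :=
  if e.1 = p then (p, len p - 1 - e.2) else e

lemma revp_ne {p : C} {len : C → ℕ} {c : C} (h : c ≠ p) (i : ℕ) : revp p len (c, i) = (c, i) := by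
  simp [revp, h]

lemma revp_p {p : C} {len : C → ℕ} (i : ℕ) : revp p len (p, i) = (p, len p - 1 - i) := by
  simp [revp]

lemma revp_bij (p : C) (len : C → ℕ) : Set.BijOn (revp p len) (EE len) (EE len) := by
  have hm : Set.MapsTo (revp p len) (EE len) (EE len) := by
    rintro ⟨c, i⟩ h
    simp only [Finset.mem_coe, mem_EE] at h
    by_cases hc : c = p
    · subst hc
      rw [revp_p]
      simp only [Finset.mem_coe, mem_EE]
      omega
    · rw [revp_ne hc]
      simpa using h
  have hinv : ∀ e ∈ EE len, revp p len (revp p len e) = e := by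
    rintro ⟨c, i⟩ h
    simp only [mem_EE] at h
    by_cases hc : c = p
    · subst hc
      rw [revp_p, revp_p]
      congr 1
      omega
    · rw [revp_ne hc, revp_ne hc]
  exact Set.InvOn.bijOn ⟨hinv, hinv⟩ hm hm

lemma cs_rev (p : C) (len : C → ℕ) (side : C → Bool) (g : C × ℕ → ℕ) (b : Bool) (j : ℕ) :
    cs p len side (g ∘ revp p len) b j = cs p len (fun c => !side c) g (!b) (len p - 1 - j) := by
  unfold cs
  congr 1
  · simp [revp_p]
  · have : (Finset.univ.filter (fun c => c ≠ p ∧ (!side c) = !b))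
        = (Finset.univ.filter (fun c => c ≠ p ∧ side c = b)) := by
      ext c
      simp
    rw [this]
    apply Finset.sum_congr rfl
    intro c hc
    simp only [Finset.mem_filter] at hc
    simp [revp_ne hc.2.1]

lemma pair_rev {p : C} {len : C → ℕ} (g : C × ℕ → ℕ) (c : C) (i : ℕ) (h : i + 1 < len c) :
    ∃ i', i' + 1 < len c ∧ (g ∘ revp p len) (c, i) + (g ∘ revp p len) (c, i + 1)
      = g (c, i') + g (c, i' + 1) ∧ (c = p → i + i' + 2 = len p) ∧ (c ≠ p → i = i') := by
  by_cases hc : c = p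
  · subst hc
    refine ⟨len c - 2 - i, by omega, ?_, by omega, by simp⟩
    simp only [Function.comp, revp_p]
    rw [add_comm]
    congr 3 <;> omega
  · exact ⟨i, h, by simp [revp_ne hc], by simp [hc], by simp⟩

lemma Good.rev {p : C} {len : C → ℕ} (hlen : ∀ c, 1 ≤ len c) {side : C → Bool} {g : C × ℕ → ℕ}
    (h : Good p len (fun c => !side c) g) : Good p len side (g ∘ revp p len) := by
  have h0 : ∀ c, c ≠ p → (g ∘ revp p len) (c, 0) = g (c, 0) := fun c hc => by
    simp [revp_ne hc]
  have hl := hlen p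
  have ht : cs p len side (g ∘ revp p len) true 0
      = cs p len (fun c => !side c) g false (len p - 1) := by
    rw [cs_rev]; rfl
  have hf : cs p len side (g ∘ revp p len) false (len p - 1)
      = cs p len (fun c => !side c) g true 0 := by
    rw [cs_rev]; simp
  refine ⟨⟨h.ok.bij.comp (revp_bij p len), ?_, ?_⟩, ?_, ?_, ?_, ?_, ?_⟩
  · intro c hc c' i hi
    obtain ⟨i', h1, h2, -⟩ := pair_rev (p := p) g c' i hi
    rw [h2, h0 c hc]
    exact h.ok.leaf c hc c' i' h1
  · intro c i c' i' hi hi' he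
    obtain ⟨j, h1, h2, h3, h4⟩ := pair_rev (p := p) g c i hi
    obtain ⟨j', h1', h2', h3', h4'⟩ := pair_rev (p := p) g c' i' hi'
    rw [h2, h2'] at he
    obtain ⟨rfl, rfl⟩ := h.ok.pair _ _ _ _ h1 h1' he
    refine ⟨rfl, ?_⟩
    by_cases hc : c = p
    · have := h3 hc
      have := h3' hc
      omega
    · rw [h4 hc, h4' hc]
  · intro c hc
    rw [h0 c hc, ht]
    exact h.leaff c hc
  · intro c hc
    rw [h0 c hc, hf]
    exact h.leaft c hc
  · intro c i hi
    obtain ⟨j, h1, h2, -⟩ := pair_rev (p := p) g c i hi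
    rw [h2, ht]
    exact h.pairf _ _ h1
  · intro c i hi
    obtain ⟨j, h1, h2, -⟩ := pair_rev (p := p) g c i hi
    rw [h2, hf]
    exact h.pairt _ _ h1
  · rw [ht, hf]
    exact h.ne.symm

/-! ### Classes and keys -/

/-- class of an edge -/
def cls (p : C) (len : C → ℕ) (X : C → Prop) (e : C × ℕ) : ℕ :=
  if e.1 = p then (if e.2 % 2 = 1 then 2 else if e.2 = 0 ∨ e.2 + 1 = len p then 3 else 0)
  else if len e.1 = 1 then 1 else if e.2 % 2 = 1 then 2
  else if X e.1 ∧ e.2 + 1 = len e.1 then 3 else 0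

/-- key of an edge -/
def ky (p : C) (len : C → ℕ) (X : C → Prop) (ρ : C → ℕ) (e : C × ℕ) : ℕ ×ₗ (ℕ ×ₗ ℕ) :=
  toLex (cls p len X e, toLex (ρ e.1, e.2))

lemma ky_lt {p : C} {len : C → ℕ} {X : C → Prop} {ρ : C → ℕ} {e e' : C × ℕ} :
    ky p len X ρ e < ky p len X ρ e' ↔ cls p len X e < cls p len X e' ∨
      (cls p len X e = cls p len X e' ∧ (ρ e.1 < ρ e'.1 ∨ (ρ e.1 = ρ e'.1 ∧ e.2 < e'.2))) := by
  simp [ky, Prod.Lex.toLex_lt_toLex]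

structure Ctx (p : C) (len : C → ℕ) (X : C → Prop) (ρ : C → ℕ) : Prop where
  len_pos : ∀ c, 1 ≤ len c
  hX : ∀ c, X c → c ≠ p ∧ len c % 2 = 1 ∧ 3 ≤ len c
  inj : Function.Injective ρ
  rX : ∀ c, X c → ρ c < ρ p
  rN : ∀ c, c ≠ p → ¬ X c → 2 ≤ len c → ρ p < ρ c
  rE : ∀ c c', c ≠ p → c' ≠ p → 3 ≤ len c → len c % 2 = 1 → len c' % 2 = 0 → ρ c < ρ c'

lemma ky_inj {p : C} {len : C → ℕ} {X : C → Prop} {ρ : C → ℕ} (hc : Ctx p len X ρ) :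
    Function.Injective (ky p len X ρ) := by
  rintro ⟨c, i⟩ ⟨c', i'⟩ h
  simp only [ky, EmbeddingLike.apply_eq_iff_eq, Prod.mk.injEq] at h
  rw [hc.inj h.2.1, h.2.2]

/-- the weak monotonicity hypotheses on a labeling -/
structure Mono (p : C) (len : C → ℕ) (X : C → Prop) (ρ : C → ℕ) (g : C × ℕ → ℕ) : Prop where
  bij : Set.BijOn g (EE len) (Set.Icc 1 (∑ c, len c))
  h1 : ∀ e e', e.2 < len e.1 → e'.2 < len e'.1 → 2 ≤ len e.1 → 2 ≤ len e'.1 →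
    ky p len X ρ e < ky p len X ρ e' → g e < g e'
  h2 : ∀ e e', e.2 < len e.1 → e'.2 < len e'.1 → cls p len X e ≤ 1 → 2 ≤ len e'.1 →
    2 ≤ cls p len X e' → g e < g e'

section
variable {p : C} {len : C → ℕ} {X : C → Prop} {ρ : C → ℕ} {g : C × ℕ → ℕ}

lemma cls_odd {c : C} {i : ℕ} (hi : i % 2 = 1) (hl : 2 ≤ len c) : cls p len X (c, i) = 2 := by
  unfold cls
  have : len c ≠ 1 := by omega
  simp [hi, this]

lemma cls_even {c : C} {i : ℕ} (hi : i % 2 = 0) (hl : 2 ≤ len c) :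
    cls p len X (c, i) = 0 ∨ cls p len X (c, i) = 3 := by
  unfold cls
  have : len c ≠ 1 := by omega
  simp [hi, this]
  split_ifs <;> simp

lemma cls_three (hc : Ctx p len X ρ) {c : C} {i : ℕ} (h : cls p len X (c, i) = 3) : c = p ∨ X c := by
  unfold cls at h
  dsimp only at h
  split_ifs at h with h1 h2 h3 h4 h5 h6 <;> simp_all

lemma Mono.le (hg : Mono p len X ρ g) {e : C × ℕ} (he : e.2 < len e.1) : g e ≤ ∑ c, len c :=
  (hg.bij.mapsTo (by simpa using he)).2

lemma Mono.pos (hg : Mono p len X ρ g) {e : C × ℕ} (he : e.2 < len e.1) : 1 ≤ g e :=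
  (hg.bij.mapsTo (by simpa using he)).1

lemma Mono.inj (hg : Mono p len X ρ g) {e e' : C × ℕ} (he : e.2 < len e.1) (he' : e'.2 < len e'.1)
    (h : g e = g e') : e = e' :=
  hg.bij.injOn (by simpa using he) (by simpa using he') h

lemma pair_split (g : C × ℕ → ℕ) (c : C) (i : ℕ) :
    g (c, i) + g (c, i + 1) = g (c, 2 * (i / 2) + 1) + g (c, 2 * ((i + 1) / 2)) := by
  rcases Nat.even_or_odd' i with ⟨k, rfl | rfl⟩
  · have h1 : 2 * k / 2 = k := by omega
    have h2 : (2 * k + 1) / 2 = k := by omega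
    rw [h1, h2, add_comm]
  · have h1 : (2 * k + 1) / 2 = k := by omega
    have h2 : (2 * k + 1 + 1) / 2 = k + 1 := by omega
    rw [h1, h2]
    rfl

lemma Mono.pair_lt (hc : Ctx p len X ρ) (hg : Mono p len X ρ g) {c c' : C} {i i' : ℕ}
    (hi : i + 1 < len c) (hi' : i' + 1 < len c')
    (hlt : cls p len X (c, 2 * ((i + 1) / 2)) < cls p len X (c', 2 * ((i' + 1) / 2)) ∨
      (cls p len X (c, 2 * ((i + 1) / 2)) = cls p len X (c', 2 * ((i' + 1) / 2)) ∧
        (ρ c < ρ c' ∨ (c = c' ∧ i < i')))) :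
    g (c, i) + g (c, i + 1) < g (c', i') + g (c', i' + 1) := by
  rw [pair_split, pair_split g c']
  have hl : 2 ≤ len c := by omega
  have hl' : 2 ≤ len c' := by omega
  have ca : cls p len X (c, 2 * (i / 2) + 1) = 2 := cls_odd (by omega) hl
  have ca' : cls p len X (c', 2 * (i' / 2) + 1) = 2 := cls_odd (by omega) hl'
  have cb := cls_even (p := p) (X := X) (i := 2 * ((i + 1) / 2)) (by omega) hl
  have cb' := cls_even (p := p) (X := X) (i := 2 * ((i' + 1) / 2)) (by omega) hl'
  have a1 : 2 * (i / 2) + 1 < len c := by omega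
  have a1' : 2 * (i' / 2) + 1 < len c' := by omega
  have b1 : 2 * ((i + 1) / 2) < len c := by omega
  have b1' : 2 * ((i' + 1) / 2) < len c' := by omega
  rcases hlt with h | ⟨h, h' | ⟨rfl, h'⟩⟩
  · have e0 : cls p len X (c, 2 * ((i + 1) / 2)) = 0 := by omega
    have e3 : cls p len X (c', 2 * ((i' + 1) / 2)) = 3 := by omega
    have k1 := hg.h1 (c, 2 * ((i + 1) / 2)) (c', 2 * (i' / 2) + 1) b1 a1' hl hl'
      (ky_lt.2 (Or.inl (by omega)))
    have k2 := hg.h1 (c, 2 * (i / 2) + 1) (c', 2 * ((i' + 1) / 2)) a1 b1' hl hl'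
      (ky_lt.2 (Or.inl (by omega)))
    omega
  · have k1 := hg.h1 (c, 2 * ((i + 1) / 2)) (c', 2 * ((i' + 1) / 2)) b1 b1' hl hl'
      (ky_lt.2 (Or.inr ⟨h, Or.inl h'⟩))
    have k2 := hg.h1 (c, 2 * (i / 2) + 1) (c', 2 * (i' / 2) + 1) a1 a1' hl hl'
      (ky_lt.2 (Or.inr ⟨by omega, Or.inl h'⟩))
    omega
  · have k1 : 2 * ((i + 1) / 2) < 2 * ((i' + 1) / 2) →
        g (c, 2 * ((i + 1) / 2)) < g (c, 2 * ((i' + 1) / 2)) := fun hh =>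
      hg.h1 _ _ b1 b1' hl hl' (ky_lt.2 (Or.inr ⟨h, Or.inr ⟨rfl, hh⟩⟩))
    have k2 : 2 * (i / 2) + 1 < 2 * (i' / 2) + 1 →
        g (c, 2 * (i / 2) + 1) < g (c, 2 * (i' / 2) + 1) := fun hh =>
      hg.h1 _ _ a1 a1' hl hl' (ky_lt.2 (Or.inr ⟨by omega, Or.inr ⟨rfl, hh⟩⟩))
    by_cases q1 : 2 * ((i + 1) / 2) < 2 * ((i' + 1) / 2)
    · have := k1 q1
      by_cases q2 : 2 * (i / 2) + 1 < 2 * (i' / 2) + 1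
      · have := k2 q2
        omega
      · have : 2 * (i / 2) + 1 = 2 * (i' / 2) + 1 := by omega
        rw [this]
        omega
    · have e : 2 * ((i + 1) / 2) = 2 * ((i' + 1) / 2) := by omega
      have := k2 (by omega)
      rw [e]
      omega

lemma leaf_cls (hc : Ctx p len X ρ) {c : C} (h : c ≠ p) : cls p len X (c, 0) ≤ 1 := by
  unfold cls
  have := hc.len_pos c
  simp only [h, if_false]
  split_ifs <;> first | omega | simp_all

lemma Mono.pairOK (hc : Ctx p len X ρ) (hg : Mono p len X ρ g) : PairOK p len g := by
  refine ⟨hg.bij, ?_, ?_⟩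
  · intro c hcp c' i hi
    rw [pair_split]
    have := hg.h2 (c, 0) (c', 2 * (i / 2) + 1) (hc.len_pos c) (by dsimp; omega) (leaf_cls hc hcp)
      (by dsimp; omega) (by rw [cls_odd (by omega) (by omega)])
    omega
  · intro c i c' i' hi hi' he
    by_contra hne
    have k1 := mt (hg.pair_lt hc hi hi') (by omega)
    have k2 := mt (hg.pair_lt hc hi' hi) (by omega)
    by_cases hcc : c = c'
    · subst hcc
      have : i ≠ i' := by tauto
      have cb := cls_even (p := p) (X := X) (i := 2 * ((i + 1) / 2)) (c := c) (len := len) (by omega) (by omega)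
      simp only [true_and] at k1 k2
      omega
    · have : ρ c ≠ ρ c' := fun h => hcc (hc.inj h)
      omega

/-- generic upper bound for pairs -/
lemma Mono.pair_le (hc : Ctx p len X ρ) (hg : Mono p len X ρ g) (A : ℕ)
    (hLX : ∀ c i, i < len c → 2 ≤ len c → i % 2 = 1 → (c = p ∨ X c) → g (c, i) ≤ A)
    (hSL : ∀ c i, i < len c → 2 ≤ len c → cls p len X (c, i) = 0 → g (c, i) ≤ A)
    (c : C) (i : ℕ) (hi : i + 1 < len c) : g (c, i) + g (c, i + 1) ≤ A + ∑ c, len c := by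
  rw [pair_split]
  have hl : 2 ≤ len c := by omega
  have a1 : 2 * (i / 2) + 1 < len c := by omega
  have b1 : 2 * ((i + 1) / 2) < len c := by omega
  have ma := hg.le (e := (c, 2 * (i / 2) + 1)) a1
  have mb := hg.le (e := (c, 2 * ((i + 1) / 2))) b1
  rcases cls_even (p := p) (X := X) (i := 2 * ((i + 1) / 2)) (by omega) hl with h | h
  · have := hSL c _ b1 hl h
    omega
  · have := hLX c _ a1 hl (by omega) (cls_three hc h)
    omega

lemma rk_mono (hc : Ctx p len X ρ) : Mono p len X ρ (rk (EE len) (ky p len X ρ)) := by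
  refine ⟨?_, ?_, ?_⟩
  · rw [← card_EE]
    exact rk_bijOn (ky_inj hc).injOn
  · intro e e' _ he' _ _ h
    exact rk_lt (by simpa using he') h
  · intro e e' _ he' h1 _ h2
    exact rk_lt (by simpa using he') (ky_lt.2 (Or.inl (by omega)))

end
end model

section model
variable {C : Type*} [Fintype C]
section
variable {p : C} {len : C → ℕ} {X : C → Prop} {ρ : C → ℕ} {g : C × ℕ → ℕ} {side : C → Bool}

lemma Mono.good (hc : Ctx p len X ρ) (hg : Mono p len X ρ g) (c₀ : C) (h₀ : 2 ≤ len c₀)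
    (ht : ∀ c i, i + 1 < len c → g (c, i) + g (c, i + 1) < cs p len side g true 0)
    (hf : ∀ c i, i + 1 < len c → g (c, i) + g (c, i + 1) < cs p len side g false (len p - 1))
    (hne : cs p len side g true 0 ≠ cs p len side g false (len p - 1)) :
    Good p len side g := by
  have hok := hg.pairOK hc
  refine ⟨hok, ?_, ?_, fun c i hi => (ht c i hi).ne, fun c i hi => (hf c i hi).ne, hne⟩
  · intro c hcp
    exact (hok.leaf c hcp c₀ 0 (by omega)).trans (ht c₀ 0 (by omega))
  · intro c hcp
    exact (hok.leaf c hcp c₀ 0 (by omega)).trans (hf c₀ 0 (by omega))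

lemma cs_ge {r z : C} (hr : r ≠ p) (hz : z ≠ p) (hrz : r ≠ z) {b : Bool} (hrs : side r = b)
    (hzs : side z = b) (j : ℕ) :
    g (p, j) + (g (r, len r - 1) + g (z, len z - 1)) ≤ cs p len side g b j := by
  unfold cs
  have : ∑ c ∈ ({r, z} : Finset C), g (c, len c - 1)
      ≤ ∑ c ∈ Finset.univ.filter (fun c => c ≠ p ∧ side c = b), g (c, len c - 1) := by
    apply Finset.sum_le_sum_of_subset
    intro x hx
    simp only [Finset.mem_insert, Finset.mem_singleton] at hx
    rcases hx with rfl | rfl <;> simp [*]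
  rw [Finset.sum_pair hrz] at this
  omega

lemma cls_le (e : C × ℕ) : cls p len X e ≤ 3 := by
  unfold cls
  split_ifs <;> omega

lemma cls_p0 : cls p len X (p, 0) = 3 := by
  simp [cls]

lemma cls_top_X (hc : Ctx p len X ρ) {r : C} (h : X r) : cls p len X (r, len r - 1) = 3 := by
  obtain ⟨h1, h2, h3⟩ := hc.hX r h
  have h4 : len r ≠ 1 := by omega
  have h5 : (len r - 1) % 2 = 0 := by omega
  have h6 : len r - 1 + 1 = len r := by omega
  simp [cls, h1, h4, h5, h, h6]

lemma cls_top_even {r : C} (h : len r % 2 = 0) (h' : 1 ≤ len r) : cls p len X (r, len r - 1) = 2 :=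
  cls_odd (by omega) (by omega)

lemma ρ_even (hc : Ctx p len X ρ) {r c : C} (hr : r ≠ p) (h : len r % 2 = 0) (hcc : c = p ∨ X c) :
    ρ c < ρ r := by
  have := hc.len_pos r
  have hN := hc.rN r hr (fun hx => by have := hc.hX r hx; omega) (by omega)
  rcases hcc with rfl | hx
  · exact hN
  · exact (hc.rX c hx).trans hN

lemma Mono.dom_odd (hc : Ctx p len X ρ) (hg : Mono p len X ρ g) {r z : C} {b : Bool} {j : ℕ}
    (hr : r ≠ p) (hz : z ≠ p) (hrz : r ≠ z) (hrs : side r = b) (hzs : side z = b)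
    (hrX : X r ∨ len r % 2 = 0) (hj : ∑ c, len c ≤ g (p, j) + 1) :
    ∀ c i, i + 1 < len c → g (c, i) + g (c, i + 1) < cs p len side g b j := by
  intro c i hi
  have h1 := cs_ge (g := g) (len := len) hr hz hrz hrs hzs j
  have hlr := hc.len_pos r
  have hlz := hc.len_pos z
  have hlr2 : 2 ≤ len r := by
    rcases hrX with h | h
    · have := hc.hX r h; omega
    · omega
  have hz1 := hg.pos (e := (z, len z - 1)) (by dsimp; omega)
  have hr1 := hg.pos (e := (r, len r - 1)) (by dsimp; omega)
  have := hg.pair_le hc (g (r, len r - 1) - 1) ?_ ?_ c i hi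
  · omega
  · intro c i hi hl hi2 hcX
    have : g (c, i) < g (r, len r - 1) := by
      apply hg.h1 _ _ hi (by dsimp; omega) hl hlr2
      rw [ky_lt, cls_odd hi2 hl]
      rcases hrX with h | h
      · left; rw [cls_top_X hc h]; omega
      · right
        rw [cls_top_even h hlr]
        exact ⟨rfl, Or.inl (ρ_even hc hr h hcX)⟩
    omega
  · intro c i hi hl h0
    have : g (c, i) < g (r, len r - 1) := by
      apply hg.h1 _ _ hi (by dsimp; omega) hl hlr2
      rw [ky_lt, h0]
      left
      rcases hrX with h | h
      · rw [cls_top_X hc h]; omega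
      · rw [cls_top_even h hlr]; omega
    omega

lemma Mono.dom_even (hc : Ctx p len X ρ) (hg : Mono p len X ρ g) {r z : C} {b : Bool} {j : ℕ}
    (hr : r ≠ p) (hz : z ≠ p) (hrz : r ≠ z) (hrs : side r = b) (hzs : side z = b)
    (hp : len p % 2 = 0) (hj : g (p, len p - 1) ≤ g (p, j))
    (hs : ∑ c, len c + 1 ≤ g (r, len r - 1) + g (z, len z - 1)) :
    ∀ c i, i + 1 < len c → g (c, i) + g (c, i + 1) < cs p len side g b j := by
  intro c i hi
  have h1 := cs_ge (g := g) (len := len) hr hz hrz hrs hzs j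
  have hlp := hc.len_pos p
  have := hg.pair_le hc (g (p, len p - 1)) ?_ ?_ c i hi
  · omega
  · intro c i hi hl hi2 hcX
    by_cases he : c = p ∧ i = len p - 1
    · rw [he.1, he.2]
    · refine (hg.h1 (c, i) (p, len p - 1) hi (by dsimp; omega) hl (by dsimp; omega) ?_).le
      rw [ky_lt, cls_odd hi2 hl, cls_odd (by omega) (by omega)]
      right
      refine ⟨rfl, ?_⟩
      rcases hcX with rfl | hx
      · right
        refine ⟨rfl, ?_⟩
        dsimp
        have : i ≠ len c - 1 := fun h => he ⟨rfl, h⟩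
        omega
      · left
        exact hc.rX c hx
  · intro c i hi hl h0
    exact (hg.h2 _ _ hi (by dsimp; omega) (by omega) (by dsimp; omega)
      (by rw [cls_odd (by omega) (by omega)])).le

/-- the rank labeling -/
def fr (p : C) (len : C → ℕ) (X : C → Prop) (ρ : C → ℕ) : C × ℕ → ℕ := rk (EE len) (ky p len X ρ)

lemma fr_mono (hc : Ctx p len X ρ) : Mono p len X ρ (fr p len X ρ) := rk_mono hc

lemma above_p0 (hc : Ctx p len X ρ) {e : C × ℕ} (he : e.2 < len e.1)
    (h : ky p len X ρ (p, 0) < ky p len X ρ e) :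
    e = (p, len p - 1) ∧ len p % 2 = 1 ∧ 2 ≤ len p := by
  obtain ⟨c, i⟩ := e
  rw [ky_lt, cls_p0] at h
  have h3 := cls_le (p := p) (len := len) (X := X) (c, i)
  rcases h with h | ⟨h, h'⟩
  · omega
  · have hc3 := cls_three hc h.symm
    rcases hc3 with rfl | hx
    · have hi : 0 < i := by dsimp at h'; omega
      dsimp at he
      unfold cls at h
      dsimp only at h
      rw [if_pos rfl] at h
      split_ifs at h with h1 h2
      · omega
      · exact ⟨by congr 1; omega, by omega, by omega⟩
    · have := hc.rX c hx
      dsimp at h'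
      omega

lemma fr_p0_odd (hc : Ctx p len X ρ) : ∑ c, len c ≤ fr p len X ρ (p, 0) + 1 := by
  rw [← card_EE]
  exact rk_ge_of_above {(p, len p - 1)} (fun e he h => by
    rw [Finset.mem_singleton]
    exact (above_p0 hc (by simpa using he) h).1)

lemma fr_p0_even (hc : Ctx p len X ρ) (h : len p % 2 = 0 ∨ len p = 1) :
    fr p len X ρ (p, 0) = ∑ c, len c := by
  apply le_antisymm
  · exact (fr_mono hc).le (hc.len_pos p)
  · rw [← card_EE]
    have := rk_ge_of_above (E := EE len) (K := ky p len X ρ) (e := (p, 0)) ∅ (fun e he h' => by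
      have := above_p0 hc (by simpa using he) h'
      omega)
    simp only [Finset.card_empty, add_zero] at this
    exact this

lemma fr_plast_odd (hc : Ctx p len X ρ) (h : len p % 2 = 1) :
    fr p len X ρ (p, len p - 1) = ∑ c, len c := by
  by_cases h1 : len p = 1
  · rw [h1]
    exact fr_p0_even hc (Or.inr h1)
  have h2 : (∑ c, len c) ≤ fr p len X ρ (p, 0) + 1 := fr_p0_odd hc
  have h3 := (fr_mono hc).le (e := (p, len p - 1)) (by dsimp; omega)
  have h4 : fr p len X ρ (p, 0) < fr p len X ρ (p, len p - 1) := by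
    apply (fr_mono hc).h1 _ _ (by dsimp; omega) (by dsimp; omega) (by dsimp; omega) (by dsimp; omega)
    rw [ky_lt, cls_p0]
    right
    refine ⟨?_, Or.inr ⟨rfl, by dsimp; omega⟩⟩
    have a : (len p - 1) % 2 = 0 := by omega
    have b : len p - 1 + 1 = len p := by omega
    simp [cls, a, b]
  omega

lemma cls_three' (hc : Ctx p len X ρ) {c : C} {i : ℕ} (h : cls p len X (c, i) = 3) (hcp : c ≠ p) :
    X c ∧ i + 1 = len c := by
  unfold cls at h
  dsimp only at h
  rw [if_neg hcp] at h
  split_ifs at h <;> first | assumption | omega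

lemma cls_two {c : C} {i : ℕ} (h : cls p len X (c, i) = 2) : i % 2 = 1 := by
  unfold cls at h
  dsimp only at h
  split_ifs at h <;> first | assumption | omega

lemma cls_three_p {i : ℕ} (h : cls p len X (p, i) = 3) : i % 2 = 0 ∧ (i = 0 ∨ i + 1 = len p) := by
  unfold cls at h
  dsimp only at h
  rw [if_pos rfl] at h
  split_ifs at h
  · omega
  · exact ⟨by omega, by assumption⟩

lemma cls_zero_X (hc : Ctx p len X ρ) {c : C} (h : c ≠ p) (hl : 2 ≤ len c) : cls p len X (c, 0) = 0 := by
  have h1 : len c ≠ 1 := by omega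
  have h2 : ¬ (0 + 1 = len c) := by omega
  simp [cls, h, h1]
  intro _ h3
  omega

lemma cls_zero_even (hc : Ctx p len X ρ) {c : C} (h : c ≠ p) (hl : len c % 2 = 0) {i : ℕ} (hi : i % 2 = 0) :
    cls p len X (c, i) = 0 := by
  have h1 : len c ≠ 1 := by omega
  simp only [cls, h, h1, hi, if_false]
  rw [if_neg (by omega), if_neg]
  rintro ⟨h2, h3⟩
  have := hc.hX c h2
  omega

lemma fr_sum_ge (hc : Ctx p len X ρ) {r z : C} (hr : r ≠ p) (hz : z ≠ p) (hrz : r ≠ z)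
    (hp : len p % 2 = 0)
    (h : (X r ∧ ¬ X z) ∨ (len r % 2 = 0 ∧ (len z = 1 ∨ len z % 2 = 0))) :
    ∑ c, len c + 1 ≤ fr p len X ρ (r, len r - 1) + fr p len X ρ (z, len z - 1) := by
  rw [← card_EE]
  have hlr := hc.len_pos r
  have hlz := hc.len_pos z
  have hlp := hc.len_pos p
  -- description of the elements above r
  have habove : ∀ e : C × ℕ, e.2 < len e.1 → ky p len X ρ (r, len r - 1) < ky p len X ρ e →
      e = (p, 0) ∨ (X e.1 ∧ e.1 ≠ r ∧ e.1 ≠ p ∧ e.2 + 1 = len e.1) ∨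
      (len r % 2 = 0 ∧ e.1 ≠ r ∧ e.1 ≠ p ∧ len e.1 % 2 = 0 ∧ e.2 % 2 = 1) := by
    rintro ⟨c, i⟩ he hk
    dsimp only at he ⊢
    rw [ky_lt] at hk
    have h3 := cls_le (p := p) (len := len) (X := X) (c, i)
    dsimp only at hk
    by_cases c3 : cls p len X (c, i) = 3
    · by_cases hcp : c = p
      · subst hcp
        have := cls_three_p c3
        left
        congr 1
        omega
      · obtain ⟨x1, x2⟩ := cls_three' hc c3 hcp
        right; left
        refine ⟨x1, ?_, hcp, x2⟩
        rintro rfl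
        rw [c3, cls_top_X hc x1] at hk
        omega
    · rcases h with ⟨h, -⟩ | ⟨h, -⟩
      · rw [cls_top_X hc h] at hk
        omega
      · rw [cls_top_even h hlr] at hk
        have c2 : cls p len X (c, i) = 2 := by omega
        right; right
        have hi := cls_two c2
        have hcr : c ≠ r := by
          rintro rfl
          omega
        have hcp : c ≠ p := by
          rintro rfl
          have := ρ_even hc hr h (Or.inl rfl)
          omega
        refine ⟨h, hcr, hcp, ?_, hi⟩
        by_contra hodd
        have : ρ c < ρ r := hc.rE c r hcp hr (by omega) (by omega) h
        omega
  apply rk_add_ge (E := EE len) (K := ky p len X ρ) (r := (r, len r - 1)) (z := (z, len z - 1))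
    (by simp; omega)
    (fun e => if e.1 = p then (r, 0) else if len e.1 % 2 = 0 then (e.1, e.2 - 1) else (e.1, 0))
  · rintro ⟨c, i⟩ he hk
    have he' : i < len c := by simpa using he
    -- targets
    have key : ∀ c' i', c' ≠ p → cls p len X (c', i') = 0 →
        ((X r ∧ ¬ X z) → i' = 0 ∧ X c') →
        ky p len X ρ (c', i') < ky p len X ρ (z, len z - 1) := by
      intro c' i' hcp' h0 hh
      rw [ky_lt, h0]
      dsimp only
      by_cases z0 : cls p len X (z, len z - 1) = 0
      · right
        refine ⟨z0.symm, Or.inl ?_⟩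
        rcases h with h | ⟨h, h' | h'⟩
        · obtain ⟨_, hx⟩ := hh h
          have : 2 ≤ len z := by
            by_contra hlt
            have : len z = 1 := by omega
            simp [cls, hz, this] at z0
          exact (hc.rX _ hx).trans (hc.rN z hz h.2 this)
        · exfalso
          simp [cls, hz, h'] at z0
        · exfalso
          rw [cls_top_even h' hlz] at z0
          omega
      · left; omega
    rcases habove _ he' hk with hh | ⟨h1, h2, h3, h4⟩ | ⟨h0, h1, h2, h3, h4⟩
    · obtain ⟨rfl, rfl⟩ := Prod.mk.inj hh
      have hl2 : 2 ≤ len r := by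
        rcases h with h | h
        · have := hc.hX r h.1; omega
        · omega
      simp only [if_true]
      refine ⟨by simp; omega, key _ _ hr (cls_zero_X hc hr hl2) (fun h => ⟨rfl, h.1⟩)⟩
    · dsimp only at h1 h2 h3 h4
      have hx := hc.hX c h1
      simp only [h3, if_false]
      rw [if_neg (by omega)]
      refine ⟨by simp; omega, key _ _ h3 (cls_zero_X hc h3 (by omega)) (fun _ => ⟨rfl, h1⟩)⟩
    · dsimp only at h1 h2 h3 h4
      simp only [h2, if_false, h3, if_true]
      refine ⟨by simp; omega, key _ _ h2 (cls_zero_even hc h2 h3 (by omega)) ?_⟩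
      intro hx
      have := hc.hX r hx.1
      omega
  · rintro ⟨c, i⟩ he ⟨c', i'⟩ he' hk hk' heq
    have hE : i < len c := by simpa using he
    have hE' : i' < len c' := by simpa using he'
    rcases habove _ hE hk with hh | ⟨h1, h2, h3, h4⟩ | ⟨h0, h1, h2, h3, h4⟩ <;>
    rcases habove _ hE' hk' with hh' | ⟨h1', h2', h3', h4'⟩ | ⟨h0', h1', h2', h3', h4'⟩
    · rw [hh, hh']
    · obtain ⟨rfl, rfl⟩ := Prod.mk.inj hh
      dsimp only at *
      simp only [if_true, h3', if_false] at heq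
      have hx := hc.hX _ h1'
      rw [if_neg (by omega)] at heq
      exact absurd (Prod.mk.inj heq).1.symm h2'
    · obtain ⟨rfl, rfl⟩ := Prod.mk.inj hh
      dsimp only at *
      simp only [if_true, h2', h3', if_false] at heq
      exact absurd (Prod.mk.inj heq).1.symm h1'
    · obtain ⟨rfl, rfl⟩ := Prod.mk.inj hh'
      dsimp only at *
      simp only [if_true, h3, if_false] at heq
      have hx := hc.hX _ h1
      rw [if_neg (by omega)] at heq
      exact absurd (Prod.mk.inj heq).1 h2
    · dsimp only at *
      have hx := hc.hX _ h1
      have hx' := hc.hX _ h1'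
      simp only [h3, h3', if_false] at heq
      rw [if_neg (by omega), if_neg (by omega)] at heq
      have := (Prod.mk.inj heq).1
      subst this
      congr 1
      omega
    · dsimp only at *
      have hx := hc.hX _ h1
      simp only [h3, h2', h3', if_true, if_false] at heq
      rw [if_neg (by omega)] at heq
      have := (Prod.mk.inj heq).1
      subst this
      omega
    · obtain ⟨rfl, rfl⟩ := Prod.mk.inj hh'
      dsimp only at *
      simp only [if_true, h2, h3, if_false] at heq
      exact absurd (Prod.mk.inj heq).1 h1
    · dsimp only at *
      have hx := hc.hX _ h1'
      simp only [h2, h3, h3', if_true, if_false] at heq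
      rw [if_neg (by omega)] at heq
      have := (Prod.mk.inj heq).1
      subst this
      omega
    · dsimp only at *
      simp only [h2, h3, h2', h3', if_true, if_false] at heq
      obtain ⟨rfl, h⟩ := Prod.mk.inj heq
      congr 1
      omega

end
end model

section model
variable {C : Type*} [Fintype C]

lemma exists_refine (t : C → ℕ) : ∃ ρ : C → ℕ, Function.Injective ρ ∧
    ∀ c c', t c < t c' → ρ c < ρ c' := by
  let φ := Fintype.equivFin C
  refine ⟨fun c => t c * (Fintype.card C) + φ c, ?_, ?_⟩
  · have key : ∀ c c', t c < t c' → t c * (Fintype.card C) + φ c < t c' * (Fintype.card C) + φ c' := by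
      intro c c' h
      have h1 := (φ c).isLt
      have h2 : (t c + 1) * Fintype.card C ≤ t c' * Fintype.card C := Nat.mul_le_mul_right _ h
      rw [add_mul] at h2
      omega
    intro c c' h
    dsimp only at h
    have ht : t c = t c' := by
      rcases lt_trichotomy (t c) (t c') with h' | h' | h'
      · have := key _ _ h'; omega
      · exact h'
      · have := key _ _ h'; omega
    rw [ht] at h
    apply φ.injective
    apply Fin.ext
    omega
  · intro c c' h
    dsimp only
    have h1 := (φ c).isLt
    have h2 : (t c + 1) * Fintype.card C ≤ t c' * Fintype.card C := Nat.mul_le_mul_right _ h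
    rw [add_mul] at h2
    omega

lemma exists_ctx (p : C) (len : C → ℕ) (hlen : ∀ c, 1 ≤ len c) (X : C → Prop)
    (hX : ∀ c, X c → c ≠ p ∧ len c % 2 = 1 ∧ 3 ≤ len c) (T : C → Prop) :
    ∃ ρ : C → ℕ, Ctx p len X ρ ∧ ∀ c c', c ≠ p → c' ≠ p → ¬ T c → T c' →
      ((len c = 1 ∧ len c' = 1) ∨ (len c % 2 = 0 ∧ len c' % 2 = 0)) → ρ c < ρ c' := by
  obtain ⟨ρ, h1, h2⟩ := exists_refine (fun c : C => 2 * (if X c then 0 else if c = p then 1 else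
    if len c % 2 = 1 then 2 else 3) + if T c then 1 else 0)
  refine ⟨ρ, ⟨hlen, hX, h1, ?_, ?_, ?_⟩, ?_⟩
  · intro c hc
    apply h2
    have hp : ¬ X p := fun h => (hX p h).1 rfl
    simp only [hc, hp, if_true, if_false]
    split_ifs <;> omega
  · intro c hcp hc hl
    apply h2
    have hp : ¬ X p := fun h => (hX p h).1 rfl
    simp only [hc, hp, hcp, if_true, if_false]
    split_ifs <;> omega
  · intro c c' hcp hcp' h3 hodd heven
    apply h2
    have hx : ¬ X c' := fun h => by have := hX c' h; omega
    simp only [hx, hcp, hcp', if_false]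
    split_ifs <;> omega
  · intro c c' hcp hcp' hT hT' h
    apply h2
    have hx : ¬ X c := fun h => by have := hX c h; omega
    have hx' : ¬ X c' := fun h => by have := hX c' h; omega
    simp only [hx, hx', hcp, hcp', hT, hT', if_true, if_false]
    split_ifs <;> omega

section
variable {p : C} {len : C → ℕ} {X : C → Prop} {ρ : C → ℕ} {g : C × ℕ → ℕ} {side : C → Bool}

lemma cs_not (b : Bool) (j : ℕ) :
    cs p len (fun c => !side c) g b j = cs p len side g (!b) j := by
  unfold cs
  congr 2
  ext c
  simp [Bool.not_eq_eq_eq_not]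

lemma other_leg {b : Bool} (hs : ∃ c c', c ≠ c' ∧ c ≠ p ∧ c' ≠ p ∧ side c = b ∧ side c' = b) (r : C) :
    ∃ z, z ≠ r ∧ z ≠ p ∧ side z = b := by
  obtain ⟨c, c', h1, h2, h3, h4, h5⟩ := hs
  by_cases h : c = r
  · exact ⟨c', by rintro rfl; exact h1 h, h3, h5⟩
  · exact ⟨c, h, h2, h4⟩

lemma swap_bij {x y : C × ℕ} (hx : x.2 < len x.1) (hy : y.2 < len y.1)
    (hg : Set.BijOn g (EE len) (Set.Icc 1 (∑ c, len c))) :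
    Set.BijOn (g ∘ Equiv.swap x y) (EE len) (Set.Icc 1 (∑ c, len c)) := by
  apply hg.comp
  have hm : Set.MapsTo (Equiv.swap x y) (EE len : Set (C × ℕ)) (EE len) := by
    intro e he
    rw [Equiv.swap_apply_def]
    split_ifs
    · simpa using hy
    · simpa using hx
    · exact he
  exact Set.InvOn.bijOn (f' := Equiv.swap x y)
    ⟨fun e _ => Equiv.swap_apply_self x y e, fun e _ => Equiv.swap_apply_self x y e⟩ hm hm

theorem caseR (hlen : ∀ c, 1 ≤ len c)
    (hs : ∀ b, ∃ c c', c ≠ c' ∧ c ≠ p ∧ c' ≠ p ∧ side c = b ∧ side c' = b)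
    (hrich : ∀ b, ∃ c, c ≠ p ∧ side c = b ∧ 2 ≤ len c) :
    ∃ g, Good p len side g ∨ Good p len (fun c => !side c) g := by
  have hr : ∀ b, ∃ r, r ≠ p ∧ side r = b ∧ 2 ≤ len r ∧ (len r % 2 = 1 ∨
      (len r % 2 = 0 ∧ ∀ c, c ≠ p → side c = b → len c = 1 ∨ len c % 2 = 0)) := by
    intro b
    by_cases h : ∃ r, r ≠ p ∧ side r = b ∧ 2 ≤ len r ∧ len r % 2 = 1
    · obtain ⟨r, h1, h2, h3, h4⟩ := h
      exact ⟨r, h1, h2, h3, Or.inl h4⟩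
    · push Not at h
      obtain ⟨c, h1, h2, h3⟩ := hrich b
      refine ⟨c, h1, h2, h3, Or.inr ⟨?_, ?_⟩⟩
      · have := h c h1 h2 h3
        omega
      · intro c' h1' h2'
        have := h c' h1' h2'
        have := hlen c'
        omega
  choose r hrp hrs hr2 hrc using hr
  choose z hzr hzp hzs using fun b => other_leg (hs b) (r b)
  let X : C → Prop := fun c => ∃ b, c = r b ∧ len c % 2 = 1
  have hX : ∀ c, X c → c ≠ p ∧ len c % 2 = 1 ∧ 3 ≤ len c := by
    rintro c ⟨b, rfl, h⟩
    have := hr2 b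
    exact ⟨hrp b, h, by omega⟩
  obtain ⟨ρ, hc, -⟩ := exists_ctx p len hlen X hX (fun _ => False)
  have hf := fr_mono hc
  set f := fr p len X ρ with hfdef
  have hrX : ∀ b, X (r b) ∨ len (r b) % 2 = 0 := by
    intro b
    rcases hrc b with h | h
    · exact Or.inl ⟨b, rfl, h⟩
    · exact Or.inr h.1
  have hlp := hlen p
  by_cases hl1 : len p = 1
  · -- the central path is a single edge
    have hm : f (p, 0) = ∑ c, len c := fr_p0_even hc (Or.inr hl1)
    have hmr := hf.le (e := (r true, 0)) (by have := hr2 true; dsimp; omega)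
    have hpr := hf.pos (e := (r true, 0)) (by have := hr2 true; dsimp; omega)
    have hner : f (r true, 0) ≠ f (p, 0) := fun h => by
      have := hf.inj (by have := hr2 true; dsimp; omega) (by dsimp; omega) h
      exact hrp true (Prod.mk.inj this).1
    obtain ⟨⟨q, k⟩, hq, hqv⟩ := hf.bij.surjOn (show (∑ c, len c) - 1 ∈ Set.Icc 1 (∑ c, len c) from
      ⟨by omega, by omega⟩)
    have hq : k < len q := by simpa using hq
    have hmax : ∀ e : C × ℕ, e.2 < len e.1 → ky p len X ρ (q, k) < ky p len X ρ e → e = (p, 0) := by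
      intro e he h
      have h1 : f (q, k) < f e := rk_lt (by simpa using he) h
      have h2 := hf.le he
      exact hf.inj he (by dsimp; omega) (by omega)
    have hqp : q ≠ p := by
      rintro rfl
      have : k = 0 := by omega
      subst this
      omega
    have htop : ∀ b, ¬ ky p len X ρ (q, k) < ky p len X ρ (r b, len (r b) - 1) := fun b h => by
      have := hmax _ (by have := hr2 b; dsimp; omega) h
      exact hrp b (Prod.mk.inj this).1
    have hq2 : 2 ≤ cls p len X (q, k) := by
      have := htop true
      rw [ky_lt] at this
      have hh : 2 ≤ cls p len X (r true, len (r true) - 1) := by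
        rcases hrX true with h | h
        · rw [cls_top_X hc h]; omega
        · rw [cls_top_even h (hlen _)]
      omega
    have hq3 := cls_le (p := p) (len := len) (X := X) (q, k)
    have hlq : 2 ≤ len q := by
      by_contra hlt
      have h1 : len q = 1 := by have := hlen q; omega
      simp [cls, hqp, h1] at hq2
    have hkt : k = len q - 1 := by
      by_cases c3 : cls p len X (q, k) = 3
      · have := cls_three' hc c3 hqp
        omega
      · have c2 : cls p len X (q, k) = 2 := by omega
        have hk := cls_two c2
        by_cases hev : len q % 2 = 0
        · by_contra hne
          have := hmax (q, k + 2) (by dsimp; omega) (by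
            rw [ky_lt, c2, cls_odd (by omega) hlq]
            right
            exact ⟨rfl, Or.inr ⟨rfl, by dsimp; omega⟩⟩)
          exact hqp (Prod.mk.inj this).1
        · exfalso
          rcases hrX true with h | h
          · apply htop true
            rw [ky_lt, cls_top_X hc h]
            left
            omega
          · apply htop true
            rw [ky_lt, cls_top_even h (hlen _), c2]
            right
            exact ⟨rfl, Or.inl (hc.rE q (r true) hqp (hrp true) (by omega) (by omega) h)⟩
    -- the swapped labeling
    have hpq : (p, 0) ≠ (q, k) := fun h => hqp (Prod.mk.inj h).1.symm
    let f' := f ∘ Equiv.swap (p, 0) (q, k)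
    have f'p : f' (p, 0) = f (q, k) := by simp [f']
    have f'q : f' (q, k) = f (p, 0) := by simp [f']
    have f'o : ∀ e, e ≠ (p, 0) → e ≠ (q, k) → f' e = f e := fun e h1 h2 => by
      simp [f', Equiv.swap_apply_of_ne_of_ne h1 h2]
    have hfree : ∀ e : C × ℕ, 2 ≤ len e.1 → e ≠ (p, 0) := by
      rintro e h rfl
      dsimp at h
      omega
    have hf' : Mono p len X ρ f' := by
      refine ⟨swap_bij (by dsimp; omega) hq hf.bij, ?_, ?_⟩
      · intro e e' he he' hl hl' hlt
        have hep := hfree e hl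
        have hep' := hfree e' hl'
        have heq : e ≠ (q, k) := by
          rintro rfl
          exact hep' (hmax e' he' hlt)
        rw [f'o e hep heq]
        have hlt' := hf.h1 e e' he he' hl hl' hlt
        by_cases h : e' = (q, k)
        · rw [h, f'q, hm]
          rw [h] at hlt'
          omega
        · rw [f'o e' hep' h]
          exact hlt'
      · intro e e' he he' h1 hl' h2
        have hep' := hfree e' hl'
        have heq : e ≠ (q, k) := by
          rintro rfl
          omega
        have hep : e ≠ (p, 0) := by
          rintro rfl
          rw [cls_p0] at h1
          omega
        rw [f'o e hep heq]
        have hlt' := hf.h2 e e' he he' h1 hl' h2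
        by_cases h : e' = (q, k)
        · rw [h, f'q, hm]
          rw [h] at hlt'
          omega
        · rw [f'o e' hep' h]
          exact hlt'
    have hcs : ∀ b, cs p len side f' b 0 + 1 = cs p len side f b 0 + if side q = b then 1 else 0 := by
      intro b
      unfold cs
      have : ∑ c ∈ Finset.univ.filter (fun c => c ≠ p ∧ side c = b), f' (c, len c - 1)
          = ∑ c ∈ Finset.univ.filter (fun c => c ≠ p ∧ side c = b),
            (f (c, len c - 1) + if c = q then 1 else 0) := by
        apply Finset.sum_congr rfl
        intro c hc'
        simp only [Finset.mem_filter] at hc'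
        by_cases hcq : c = q
        · subst hcq
          rw [← hkt, f'q]
          simp
          omega
        · rw [f'o _ (fun h => hc'.2.1 (Prod.mk.inj h).1) (fun h => hcq (Prod.mk.inj h).1)]
          simp [hcq]
      rw [this, Finset.sum_add_distrib, Finset.sum_ite_eq', f'p]
      simp only [Finset.mem_filter, Finset.mem_univ, true_and, hqp, ne_eq, not_false_eq_true]
      omega
    have e0 : len p - 1 = 0 := by omega
    have d : ∀ b, ∀ c i, i + 1 < len c → f (c, i) + f (c, i + 1) < cs p len side f b 0 := fun b =>
      hf.dom_odd hc (hrp b) (hzp b) (hzr b).symm (hrs b) (hzs b) (hrX b) (by omega)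
    have d' : ∀ b, ∀ c i, i + 1 < len c → f' (c, i) + f' (c, i + 1) < cs p len side f' b 0 := fun b =>
      hf'.dom_odd hc (hrp b) (hzp b) (hzr b).symm (hrs b) (hzs b) (hrX b) (by omega)
    by_cases hne : cs p len side f true 0 = cs p len side f false 0
    · refine ⟨f', Or.inl (hf'.good hc (r true) (hr2 true) (d' true) ?_ ?_)⟩
      · rw [e0]; exact d' false
      · rw [e0]
        have h1 := hcs true
        have h2 := hcs false
        cases hsq : side q <;> simp [hsq] at h1 h2 <;> omega
    · refine ⟨f, Or.inl (hf.good hc (r true) (hr2 true) (d true) ?_ ?_)⟩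
      · rw [e0]; exact d false
      · rw [e0]; exact hne
  · -- long central path
    have hne0 : f (p, 0) ≠ f (p, len p - 1) := fun h => by
      have := hf.inj (by dsimp; omega) (by dsimp; omega) h
      have := (Prod.mk.inj this).2
      omega
    have d : ∀ b j, (j = 0 ∨ j = len p - 1) →
        ∀ c i, i + 1 < len c → f (c, i) + f (c, i + 1) < cs p len side f b j := by
      intro b j hj
      by_cases hp : len p % 2 = 0
      · refine hf.dom_even hc (hrp b) (hzp b) (hzr b).symm (hrs b) (hzs b) hp ?_ ?_
        · rcases hj with rfl | rfl
          · rw [hfdef, fr_p0_even hc (Or.inl hp)]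
            exact hf.le (by dsimp; omega)
          · exact le_rfl
        · apply fr_sum_ge hc (hrp b) (hzp b) (hzr b).symm hp
          rcases hrc b with h | ⟨h, h'⟩
          · left
            refine ⟨⟨b, rfl, h⟩, ?_⟩
            rintro ⟨b', h1, h2⟩
            have : b = b' := by rw [← hzs b, h1, hrs b']
            subst this
            exact hzr b h1
          · right
            exact ⟨h, h' (z b) (hzp b) (hzs b)⟩
      · refine hf.dom_odd hc (hrp b) (hzp b) (hzr b).symm (hrs b) (hzs b) (hrX b) ?_
        rcases hj with rfl | rfl
        · exact fr_p0_odd hc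
        · rw [hfdef, fr_plast_odd hc (by omega)]
          omega
    refine ⟨f, ?_⟩
    by_cases hne : cs p len side f true 0 = cs p len side f false (len p - 1)
    · right
      apply hf.good hc (r true) (hr2 true)
      · rw [cs_not]; exact d _ _ (Or.inl rfl)
      · rw [cs_not]; exact d _ _ (Or.inr rfl)
      · rw [cs_not, cs_not]
        unfold cs at hne ⊢
        simp only [Bool.not_true, Bool.not_false]
        omega
    · left
      exact hf.good hc (r true) (hr2 true) (d _ _ (Or.inl rfl)) (d _ _ (Or.inr rfl)) hne

end
end model

section model
variable {C : Type*} [Fintype C]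

/-- number of edges of class at most one -/
def MM (p : C) (len : C → ℕ) (X : C → Prop) : ℕ :=
  ((EE len).filter (fun e => cls p len X e ≤ 1)).card

/-- the end of the central path at center `b` -/
def jend (p : C) (len : C → ℕ) (b : Bool) : ℕ := if b = true then 0 else len p - 1

section
variable {p : C} {len : C → ℕ} {X : C → Prop} {ρ : C → ℕ} {g : C × ℕ → ℕ} {side : C → Bool}

lemma Mono.good' (hc : Ctx p len X ρ) (hg : Mono p len X ρ g) (c₀ : C) (h₀ : 2 ≤ len c₀) (b : Bool)
    (ht : ∀ c i, i + 1 < len c → g (c, i) + g (c, i + 1) < cs p len side g b (jend p len b))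
    (hf : ∀ c i, i + 1 < len c → g (c, i) + g (c, i + 1) < cs p len side g (!b) (jend p len (!b)))
    (hne : cs p len side g b (jend p len b) ≠ cs p len side g (!b) (jend p len (!b))) :
    Good p len side g := by
  cases b
  · exact hg.good hc c₀ h₀ (by simpa [jend] using hf) (by simpa [jend] using ht)
      (by simpa [jend] using hne.symm)
  · exact hg.good hc c₀ h₀ (by simpa [jend] using ht) (by simpa [jend] using hf)
      (by simpa [jend] using hne)

lemma fr_le_MM (hc : Ctx p len X ρ) {e : C × ℕ} (h : cls p len X e ≤ 1) : fr p len X ρ e ≤ MM p len X := by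
  apply Finset.card_le_card
  intro x hx
  simp only [Finset.mem_filter] at hx ⊢
  refine ⟨hx.1, ?_⟩
  by_contra h'
  exact absurd (ky_lt (ρ := ρ).2 (Or.inl (show cls p len X e < cls p len X x by omega))) (not_lt.2 hx.2)

lemma MM_le_fr (hc : Ctx p len X ρ) {e : C × ℕ} (S : Finset (C × ℕ))
    (h : ∀ e', e'.2 < len e'.1 → cls p len X e' ≤ 1 → ky p len X ρ e < ky p len X ρ e' → e' ∈ S) :
    MM p len X ≤ fr p len X ρ e + S.card := by
  have : (EE len).filter (fun e => cls p len X e ≤ 1) ⊆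
      ((EE len).filter (fun e' => ky p len X ρ e' ≤ ky p len X ρ e)) ∪ S := by
    intro x hx
    simp only [Finset.mem_filter, Finset.mem_union, mem_EE] at hx ⊢
    by_cases h' : ky p len X ρ x ≤ ky p len X ρ e
    · exact Or.inl ⟨hx.1, h'⟩
    · exact Or.inr (h x hx.1 hx.2 (not_le.1 h'))
  exact (Finset.card_le_card this).trans (Finset.card_union_le _ _)

lemma MM_add_le (S : Finset (C × ℕ)) (h : ∀ e ∈ S, e.2 < len e.1 ∧ 2 ≤ cls p len X e) :
    MM p len X + S.card ≤ ∑ c, len c := by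
  rw [← card_EE, MM, ← Finset.card_filter_add_card_filter_not (s := EE len) (fun e => cls p len X e ≤ 1)]
  apply Nat.add_le_add_left
  apply Finset.card_le_card
  intro x hx
  simp only [Finset.mem_filter, mem_EE]
  have := h x hx
  exact ⟨this.1, by omega⟩

lemma fr_L_le (hc : Ctx p len X ρ) {c : C} {i : ℕ} (hi : i < len c) (hi2 : i % 2 = 1)
    (hcX : c = p ∨ X c) (Q : Finset (C × ℕ))
    (hQ : ∀ e ∈ Q, e.2 < len e.1 ∧ cls p len X e ≤ 1 ∧ e.1 ≠ p ∧ ¬ X e.1) :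
    fr p len X ρ (c, i) + Q.card ≤ 2 * MM p len X + 1 := by
  have hl : 2 ≤ len c := by omega
  have ρc : ρ c ≤ ρ p := by
    rcases hcX with rfl | h
    · exact le_rfl
    · exact (hc.rX c h).le
  set A := (EE len).filter (fun e => cls p len X e ≤ 1) with hA
  have hQA : Q ⊆ A := by
    intro e he
    have := hQ e he
    simp only [hA, Finset.mem_filter, mem_EE]
    exact ⟨this.1, this.2.1⟩
  set B := (EE len).filter (fun e => cls p len X e = 2 ∧ ρ e.1 ≤ ρ p) with hB
  have h1 : (EE len).filter (fun e' => ky p len X ρ e' ≤ ky p len X ρ (c, i)) ⊆ A ∪ B := by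
    intro x hx
    simp only [hA, hB, Finset.mem_filter, Finset.mem_union, mem_EE] at hx ⊢
    obtain ⟨hx1, hx2⟩ := hx
    rw [← not_lt, ky_lt, cls_odd hi2 hl] at hx2
    push Not at hx2
    by_cases h : cls p len X x ≤ 1
    · exact Or.inl ⟨hx1, h⟩
    · right
      have h2 : cls p len X x = 2 := by have := hx2.1; omega
      refine ⟨hx1, h2, ?_⟩
      have := (hx2.2 h2.symm).1
      dsimp only at this
      omega
  have h2 : B.card ≤ (insert (p, 0) (A \ Q)).card := by
    apply Finset.card_le_card_of_injOn (fun e => (e.1, e.2 - 1))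
    · rintro ⟨c', i'⟩ he
      simp only [hB, Finset.coe_filter, Set.mem_ofPred_eq, mem_EE] at he
      obtain ⟨he, h2, hρ⟩ := he
      have hi' := cls_two h2
      have hcX' : c' = p ∨ X c' := by
        by_contra hcon
        push Not at hcon
        have := hc.rN c' hcon.1 hcon.2 (by omega)
        omega
      have hcl : cls p len X (c', i' - 1) = 0 ∨ (c', i' - 1) = (p, 0) := by
        rcases cls_even (p := p) (X := X) (len := len) (c := c') (i := i' - 1) (by omega) (by omega) with h | h
        · exact Or.inl h
        · right
          by_cases hcp : c' = p
          · subst hcp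
            have := cls_three_p h
            congr 1
            omega
          · have := cls_three' hc h hcp
            omega
      simp only [Finset.coe_insert, Set.mem_insert_iff, Finset.coe_sdiff, Set.mem_sdiff, Finset.mem_coe, hA,
        Finset.mem_filter, mem_EE]
      rcases hcl with h | h
      · right
        refine ⟨⟨by omega, by omega⟩, fun hq => ?_⟩
        have := hQ _ hq
        tauto
      · exact Or.inl h
    · rintro ⟨c', i'⟩ he ⟨c'', i''⟩ he' heq
      simp only [hB, Finset.coe_filter, Set.mem_ofPred_eq] at he he'
      have h2 := cls_two he.2.1
      have h2' := cls_two he'.2.1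
      obtain ⟨h3, h4⟩ := Prod.mk.inj heq
      dsimp only at h3 h4
      rw [h3]
      congr 1
      omega
  have h3 := Finset.card_insert_le (p, 0) (A \ Q)
  have h4 := Finset.card_sdiff_add_card_eq_card hQA
  have h5 := (Finset.card_le_card h1).trans (Finset.card_union_le _ _)
  have h6 : A.card = MM p len X := rfl
  have h7 : fr p len X ρ (c, i) = ((EE len).filter (fun e' => ky p len X ρ e' ≤ ky p len X ρ (c, i))).card := rfl
  omega

/-- dominance of the poor center -/
lemma Mono.dom_poor (hc : Ctx p len X ρ) (hg : Mono p len X ρ g) {s₁ s₂ : C} {b : Bool} {j : ℕ}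
    (h1 : s₁ ≠ p) (h2 : s₂ ≠ p) (h12 : s₁ ≠ s₂) (hs1 : side s₁ = b) (hs2 : side s₂ = b)
    (hl1 : len s₁ = 1) (hl2 : len s₂ = 1)
    (hj : g (p, j) = ∑ c, len c)
    (hL : ∀ c i, i < len c → i % 2 = 1 → (c = p ∨ X c) → g (c, i) < g (s₁, 0) + g (s₂, 0))
    (hS : ∀ c i, i < len c → cls p len X (c, i) = 0 → g (c, i) < g (s₁, 0) + g (s₂, 0)) :
    ∀ c i, i + 1 < len c → g (c, i) + g (c, i + 1) < cs p len side g b j := by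
  intro c i hi
  have h3 := cs_ge (g := g) (len := len) h1 h2 h12 hs1 hs2 j
  rw [hl1, hl2] at h3
  have h4 := hg.pos (e := (s₁, 0)) (by dsimp; omega)
  have := hg.pair_le hc (g (s₁, 0) + g (s₂, 0) - 1) ?_ ?_ c i hi
  · simp only [Nat.sub_self] at h3
    omega
  · intro c i hi hl hi2 hcX
    have := hL c i hi hi2 hcX
    omega
  · intro c i hi hl h0
    have := hS c i hi h0
    omega

lemma exception {s₁ s₂ r z : C} (hall : ∀ c, c = p ∨ c = s₁ ∨ c = s₂ ∨ c = r ∨ c = z)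
    (h1 : s₁ ≠ p) (h2 : s₂ ≠ p) (hr : r ≠ p) (hz : z ≠ p) (h12 : s₁ ≠ s₂) (hrz : r ≠ z)
    (hs1 : side s₁ = true) (hs2 : side s₂ = true) (hsr : side r = false) (hsz : side z = false)
    (hl1 : len s₁ = 1) (hl2 : len s₂ = 1) (hlz : len z = 1) (hlr : len r = 3) (hlp : len p = 2) :
    ∃ g, Good p len side g := by
  have d1 : s₁ ≠ r := by rintro rfl; simp_all
  have d2 : s₁ ≠ z := by rintro rfl; simp_all
  have d3 : s₂ ≠ r := by rintro rfl; simp_all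
  have d4 : s₂ ≠ z := by rintro rfl; simp_all
  let g : C × ℕ → ℕ := fun e => if e.1 = p then (if e.2 = 0 then 8 else 6) else if e.1 = s₁ then 3 else
    if e.1 = s₂ then 2 else if e.1 = z then 4 else (if e.2 = 0 then 1 else if e.2 = 1 then 5 else 7)
  have huniv : (Finset.univ : Finset C) = {p, s₁, s₂, r, z} := by
    ext c
    simpa using hall c
  have hsum : ∑ c, len c = 8 := by
    rw [huniv, Finset.sum_insert, Finset.sum_insert, Finset.sum_insert, Finset.sum_pair hrz]
    · omega
    · simp [d3, d4]
    · simp [h12, d1, d2]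
    · simp [h1.symm, h2.symm, hr.symm, hz.symm]
  have gp0 : g (p, 0) = 8 := by simp [g]
  have gp1 : g (p, 1) = 6 := by simp [g]
  have gs1 : g (s₁, 0) = 3 := by simp [g, h1]
  have gs2 : g (s₂, 0) = 2 := by simp [g, h2, h12.symm]
  have gz : g (z, 0) = 4 := by simp [g, hz, d2.symm, d4.symm]
  have gr0 : g (r, 0) = 1 := by simp [g, hr, d1.symm, d3.symm, hrz]
  have gr1 : g (r, 1) = 5 := by simp [g, hr, d1.symm, d3.symm, hrz]
  have gr2 : g (r, 2) = 7 := by simp [g, hr, d1.symm, d3.symm, hrz]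
  have ct : cs p len side g true 0 = 13 := by
    unfold cs
    have : (Finset.univ.filter (fun c => c ≠ p ∧ side c = true)) = {s₁, s₂} := by
      ext c
      simp only [Finset.mem_filter, Finset.mem_univ, true_and, Finset.mem_insert, Finset.mem_singleton]
      constructor
      · rintro ⟨h, h'⟩
        rcases hall c with rfl | rfl | rfl | rfl | rfl <;> simp_all
      · rintro (rfl | rfl) <;> simp_all
    rw [this, Finset.sum_pair h12, hl1, hl2]
    simp only [Nat.sub_self]
    omega
  have cf : cs p len side g false (len p - 1) = 17 := by
    unfold cs
    have : (Finset.univ.filter (fun c => c ≠ p ∧ side c = false)) = {r, z} := by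
      ext c
      simp only [Finset.mem_filter, Finset.mem_univ, true_and, Finset.mem_insert, Finset.mem_singleton]
      constructor
      · rintro ⟨h, h'⟩
        rcases hall c with rfl | rfl | rfl | rfl | rfl <;> simp_all
      · rintro (rfl | rfl) <;> simp_all
    rw [this, Finset.sum_pair hrz, hlr, hlz, hlp]
    simp only [Nat.sub_self, Nat.reduceSub]
    omega
  have hE : ∀ e ∈ (EE len : Set (C × ℕ)), e = (p, 0) ∨ e = (p, 1) ∨ e = (s₁, 0) ∨ e = (s₂, 0) ∨ e = (z, 0) ∨
      e = (r, 0) ∨ e = (r, 1) ∨ e = (r, 2) := by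
    rintro ⟨c, i⟩ he
    have he : i < len c := by simpa using he
    simp only [Prod.mk.injEq]
    rcases hall c with rfl | rfl | rfl | rfl | rfl <;> simp_all <;> omega
  have hbij : Set.BijOn g (EE len) (Set.Icc 1 (∑ c, len c)) := by
    rw [hsum]
    refine ⟨?_, ?_, ?_⟩
    · intro e he
      rcases hE e he with rfl | rfl | rfl | rfl | rfl | rfl | rfl | rfl <;>
        simp only [gp0, gp1, gs1, gs2, gz, gr0, gr1, gr2] <;> decide
    · intro e he e' he' h
      rcases hE e he with rfl | rfl | rfl | rfl | rfl | rfl | rfl | rfl <;>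
      rcases hE e' he' with rfl | rfl | rfl | rfl | rfl | rfl | rfl | rfl <;>
        simp only [gp0, gp1, gs1, gs2, gz, gr0, gr1, gr2] at h <;> first | rfl | omega
    · rintro x ⟨hx1, hx2⟩
      have : x = 1 ∨ x = 2 ∨ x = 3 ∨ x = 4 ∨ x = 5 ∨ x = 6 ∨ x = 7 ∨ x = 8 := by omega
      rcases this with rfl | rfl | rfl | rfl | rfl | rfl | rfl | rfl
      · exact ⟨_, by simp [hlr], gr0⟩
      · exact ⟨_, by simp [hl2], gs2⟩
      · exact ⟨_, by simp [hl1], gs1⟩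
      · exact ⟨_, by simp [hlz], gz⟩
      · exact ⟨_, by simp [hlr], gr1⟩
      · exact ⟨_, by simp [hlp], gp1⟩
      · exact ⟨_, by simp [hlr], gr2⟩
      · exact ⟨_, by simp [hlp], gp0⟩
  have hleaf : ∀ c, c ≠ p → g (c, 0) ≤ 4 := by
    intro c hc
    rcases hall c with rfl | rfl | rfl | rfl | rfl
    · exact absurd rfl hc
    all_goals omega
  have hpair : ∀ c i, i + 1 < len c → (c = p ∧ i = 0 ∧ g (c, i) + g (c, i + 1) = 14) ∨
      (c = r ∧ i = 0 ∧ g (c, i) + g (c, i + 1) = 6) ∨ (c = r ∧ i = 1 ∧ g (c, i) + g (c, i + 1) = 12) := by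
    intro c i hi
    rcases hall c with rfl | rfl | rfl | rfl | rfl
    · have : i = 0 := by omega
      subst this
      left
      exact ⟨rfl, rfl, by simp only [Nat.zero_add]; omega⟩
    · omega
    · omega
    · have : i = 0 ∨ i = 1 := by omega
      rcases this with rfl | rfl
      · right; left
        exact ⟨rfl, rfl, by simp only [Nat.zero_add]; omega⟩
      · right; right
        exact ⟨rfl, rfl, by simp only [Nat.reduceAdd]; omega⟩
    · omega
  refine ⟨g, ⟨hbij, ?_, ?_⟩, ?_, ?_, ?_, ?_, ?_⟩
  · intro c hc c' i hi
    have := hleaf c hc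
    have := hpair c' i hi
    omega
  · intro c i c' i' hi hi' he
    rcases hpair c i hi with ⟨a1, a2, a3⟩ | ⟨a1, a2, a3⟩ | ⟨a1, a2, a3⟩ <;>
    rcases hpair c' i' hi' with ⟨b1, b2, b3⟩ | ⟨b1, b2, b3⟩ | ⟨b1, b2, b3⟩ <;>
    first
    | exact ⟨a1.trans b1.symm, a2.trans b2.symm⟩
    | omega
  · intro c hc
    have := hleaf c hc
    omega
  · intro c hc
    have := hleaf c hc
    omega
  · intro c i hi
    have := hpair c i hi
    omega
  · intro c i hi
    have := hpair c i hi
    omega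
  · omega

end
end model

section model
variable {C : Type*} [Fintype C]
section
variable {p : C} {len : C → ℕ} {X : C → Prop} {ρ : C → ℕ} {g : C × ℕ → ℕ} {side : C → Bool}

lemma cls_pendant {c : C} (h : c ≠ p) (hl : len c = 1) (i : ℕ) : cls p len X (c, i) = 1 := by
  simp [cls, h, hl]

lemma cls_one {c : C} {i : ℕ} (h : cls p len X (c, i) = 1) : c ≠ p ∧ len c = 1 := by
  unfold cls at h
  dsimp only at h
  split_ifs at h <;> first | omega | exact ⟨by assumption, by assumption⟩

set_option maxHeartbeats 4000000 in
theorem caseP (hlen : ∀ c, 1 ≤ len c) (b₀ : Bool) (hb₀ : b₀ = true ↔ len p % 2 = 0)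
    (hs : ∀ b, ∃ c c', c ≠ c' ∧ c ≠ p ∧ c' ≠ p ∧ side c = b ∧ side c' = b)
    (hpoor : ∀ c, c ≠ p → side c = b₀ → len c = 1)
    (hrich : ∃ c, c ≠ p ∧ side c = (!b₀) ∧ 2 ≤ len c) :
    ∃ g, Good p len side g := by
  obtain ⟨r, hrp, hrs, hr2, hrc⟩ : ∃ r, r ≠ p ∧ side r = (!b₀) ∧ 2 ≤ len r ∧ (len r % 2 = 0 ∨
      (len r % 2 = 1 ∧ ∀ c, c ≠ p → side c = (!b₀) → len c % 2 = 1)) := by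
    by_cases h : ∃ r, r ≠ p ∧ side r = (!b₀) ∧ 2 ≤ len r ∧ len r % 2 = 0
    · obtain ⟨r, h1, h2, h3, h4⟩ := h
      exact ⟨r, h1, h2, h3, Or.inl h4⟩
    · push Not at h
      obtain ⟨c, h1, h2, h3⟩ := hrich
      refine ⟨c, h1, h2, h3, Or.inr ⟨?_, ?_⟩⟩
      · have := h c h1 h2 h3
        omega
      · intro c' h1' h2'
        have := h c' h1' h2'
        have := hlen c'
        omega
  obtain ⟨z, hzr, hzp, hzs⟩ := other_leg (hs (!b₀)) r
  have hbb : ∀ c, side c = (!b₀) → side c ≠ b₀ := by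
    intro c h h'
    rw [h'] at h
    cases b₀ <;> simp at h
  have hbb' : ∀ c, side c ≠ b₀ → side c = (!b₀) := by
    intro c h
    cases hc : side c <;> cases b₀ <;> simp_all
  let X : C → Prop := fun c => c = r ∧ len r % 2 = 1
  have hX : ∀ c, X c → c ≠ p ∧ len c % 2 = 1 ∧ 3 ≤ len c := by
    rintro c ⟨rfl, h⟩
    exact ⟨hrp, h, by omega⟩
  have hrX : X r ∨ len r % 2 = 0 := by
    rcases hrc with h | h
    · exact Or.inr h
    · exact Or.inl ⟨rfl, h.1⟩
  obtain ⟨ρ, hc, hT⟩ := exists_ctx p len hlen X hX (fun c => c = r ∨ side c = b₀)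
  have hf := fr_mono hc
  set f := fr p len X ρ with hfdef
  set m := ∑ c, len c with hm
  set M := MM p len X with hM
  have hlp := hlen p
  have hlz := hlen z
  -- poor end
  have hfj0 : f (p, jend p len b₀) = m := by
    unfold jend
    split_ifs with h
    · exact fr_p0_even hc (Or.inl (hb₀.1 h))
    · exact fr_plast_odd hc (by have := mt hb₀.2 h; omega)
  -- above r
  have habove_r : ∀ e : C × ℕ, e.2 < len e.1 → ky p len X ρ (r, len r - 1) < ky p len X ρ e →
      e = (p, 0) ∨ (e = (p, len p - 1) ∧ len p % 2 = 1) := by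
    rintro ⟨c, i⟩ he hk
    dsimp only at he
    rw [ky_lt] at hk
    have h3 := cls_le (p := p) (len := len) (X := X) (c, i)
    dsimp only at hk
    by_cases c3 : cls p len X (c, i) = 3
    · by_cases hcp : c = p
      · subst hcp
        obtain ⟨h1, h2 | h2⟩ := cls_three_p c3
        · left; rw [h2]
        · right; exact ⟨by congr 1; omega, by omega⟩
      · obtain ⟨x1, x2⟩ := cls_three' hc c3 hcp
        have hcr : c = r := x1.1
        subst hcr
        rw [c3, cls_top_X hc x1] at hk
        omega
    · rcases hrX with h | h
      · rw [cls_top_X hc h] at hk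
        omega
      · rw [cls_top_even h (hlen r)] at hk
        have c2 : cls p len X (c, i) = 2 := by omega
        have hi := cls_two c2
        exfalso
        have hcr : c ≠ r := by
          rintro rfl
          omega
        have hcp : c ≠ p := by
          rintro rfl
          have := ρ_even hc hrp h (Or.inl rfl)
          omega
        have hcs : side c ≠ b₀ := fun h' => by
          have := hpoor c hcp h'
          omega
        by_cases hodd : len c % 2 = 1
        · have : ρ c < ρ r := hc.rE c r hcp hrp (by omega) (by omega) h
          omega
        · have := hT c r hcp hrp (fun h => h.elim hcr hcs) (Or.inl rfl) (Or.inr ⟨by omega, h⟩)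
          omega
  have hfr : m ≤ f (r, len r - 1) + 2 := by
    rw [hm, ← card_EE]
    refine (rk_ge_of_above {(p, 0), (p, len p - 1)} (fun e he h => ?_)).trans
      (Nat.add_le_add_left Finset.card_le_two _)
    have := habove_r e (by simpa using he) h
    simp only [Finset.mem_insert, Finset.mem_singleton]
    clear * - this
    tauto
  have hfr' : (len p % 2 = 0 ∨ len p = 1) → m ≤ f (r, len r - 1) + 1 := by
    intro hp
    rw [hm, ← card_EE]
    refine (rk_ge_of_above {(p, 0)} (fun e he h => ?_))
    have := habove_r e (by simpa using he) h
    simp only [Finset.mem_singleton]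
    rcases this with h | ⟨h, h'⟩
    · exact h
    · rw [h]; congr 1; omega
  have hr0 : cls p len X (r, 0) = 0 := cls_zero_X hc hrp hr2
  have hfz : 2 ≤ f (z, len z - 1) := by
    by_cases hz1 : len z = 1
    · have h1 : f (r, 0) < f (z, len z - 1) := by
        apply rk_lt (by simp; omega)
        rw [ky_lt, hr0, cls_pendant hzp hz1]
        left; omega
      have := hf.pos (e := (r, 0)) (by dsimp; omega)
      omega
    · have h1 : f (z, 0) < f (z, len z - 1) := by
        apply rk_lt (by simp; omega)
        rw [ky_lt, cls_zero_X hc hzp (by omega)]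
        by_cases h : cls p len X (z, len z - 1) = 0
        · right
          exact ⟨h.symm, Or.inr ⟨rfl, by dsimp; omega⟩⟩
        · left; omega
      have := hf.pos (e := (z, 0)) (by dsimp; omega)
      omega
  -- rich dominance
  have hdomrich : ∀ g, Mono p len X ρ g → (∀ j, g (p, j) = f (p, j) ∨ cls p len X (p, j) ≤ 1) →
      f (r, len r - 1) ≤ g (r, len r - 1) → f (z, len z - 1) ≤ g (z, len z - 1) →
      ∀ c i, i + 1 < len c → g (c, i) + g (c, i + 1) < cs p len side g (!b₀) (jend p len (!b₀)) := by
    intro g hg h1 h2 h3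
    by_cases hp : len p % 2 = 0
    · have hb : b₀ = true := hb₀.2 hp
      refine hg.dom_even hc hrp hzp hzr.symm hrs hzs hp ?_ ?_
      · rw [hb]; simp [jend]
      · have := hfr' (Or.inl hp)
        omega
    · have hb : b₀ = false := by
        cases hb : b₀
        · rfl
        · exact absurd (hb₀.1 hb) hp
      refine hg.dom_odd hc hrp hzp hzr.symm hrs hzs hrX ?_
      have h4 : jend p len (!b₀) = 0 := by rw [hb]; simp [jend]
      rw [h4]
      rcases h1 0 with h | h
      · rw [h]
        exact fr_p0_odd hc
      · rw [cls_p0] at h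
        omega
  -- poor pendants
  set P := (Finset.univ.filter (fun c : C => c ≠ p ∧ side c = b₀)) with hP
  have memP : ∀ c, c ∈ P ↔ c ≠ p ∧ side c = b₀ := by
    intro c; simp [hP]
  have hPne : P.Nonempty := by
    obtain ⟨c, c', h1, h2, h3, h4, h5⟩ := hs b₀
    exact ⟨c, (memP c).2 ⟨h2, h4⟩⟩
  obtain ⟨s₁, hs1P, hs1max⟩ := P.exists_max_image ρ hPne
  have hPne' : (P.erase s₁).Nonempty := by
    obtain ⟨y, h1, h2, h3⟩ := other_leg (hs b₀) s₁
    exact ⟨y, Finset.mem_erase.2 ⟨h1, (memP y).2 ⟨h2, h3⟩⟩⟩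
  obtain ⟨s₂, hs2P', hs2max⟩ := (P.erase s₁).exists_max_image ρ hPne'
  obtain ⟨s, hsP, hsmin⟩ := P.exists_min_image ρ hPne
  have hs21 := (Finset.mem_erase.1 hs2P').1
  have hs2P := (Finset.mem_erase.1 hs2P').2
  obtain ⟨hs1p, hs1s⟩ := (memP _).1 hs1P
  obtain ⟨hs2p, hs2s⟩ := (memP _).1 hs2P
  obtain ⟨hsp, hss⟩ := (memP _).1 hsP
  have hl1 := hpoor s₁ hs1p hs1s
  have hl2 := hpoor s₂ hs2p hs2s
  have hls := hpoor s hsp hss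
  have hss1 : s ≠ s₁ := by
    rintro rfl
    have h1 := hs1max s₂ hs2P
    have h2 := hsmin s₂ hs2P
    exact hs21 (hc.inj (le_antisymm h1 h2))
  -- above a poor pendant
  have habove_s : ∀ c ∈ P, ∀ e : C × ℕ, e.2 < len e.1 → cls p len X e ≤ 1 →
      ky p len X ρ (c, 0) < ky p len X ρ e → e.1 ∈ P ∧ e.2 = 0 ∧ ρ c < ρ e.1 := by
    rintro c hcP ⟨c', i⟩ he h1 hk
    obtain ⟨hcp, hcs⟩ := (memP _).1 hcP
    have hlc := hpoor c hcp hcs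
    rw [ky_lt, cls_pendant hcp hlc] at hk
    have c1 : cls p len X (c', i) = 1 := by omega
    obtain ⟨hp', hl'⟩ := cls_one c1
    dsimp only at *
    have hi : i = 0 := by omega
    subst hi
    have hlt : ρ c < ρ c' := by omega
    refine ⟨?_, rfl, hlt⟩
    rw [memP]
    refine ⟨hp', ?_⟩
    by_contra hns
    have hnr : c' ≠ r := by rintro rfl; omega
    have := hT c' c hp' hcp (by exact fun h => h.elim hnr hns) (Or.inr hcs) (Or.inl ⟨hl', hlc⟩)
    omega
  have hfs1 : f (s₁, 0) = M := by
    apply le_antisymm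
    · exact fr_le_MM hc (by rw [cls_pendant hs1p hl1])
    · have := MM_le_fr hc (e := (s₁, 0)) ∅ (fun e he h1 hk => by
        obtain ⟨h2, h3, h4⟩ := habove_s s₁ hs1P e he h1 hk
        have := hs1max _ h2
        omega)
      simp only [Finset.card_empty, add_zero] at this
      exact this
  have hfs2 : M ≤ f (s₂, 0) + 1 := by
    refine MM_le_fr hc (e := (s₂, 0)) {(s₁, 0)} (fun e he h1 hk => ?_)
    obtain ⟨h2, h3, h4⟩ := habove_s s₂ hs2P e he h1 hk
    rw [Finset.mem_singleton]
    by_contra hne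
    have : e.1 ≠ s₁ := fun h => hne (Prod.ext h h3)
    have := hs2max _ (Finset.mem_erase.2 ⟨this, h2⟩)
    omega
  have hfs2' : f (s₂, 0) < M := by
    have h1 : f (s₂, 0) ≤ M := fr_le_MM hc (by rw [cls_pendant hs2p hl2])
    have h2 : f (s₂, 0) ≠ M := fun h => by
      have := hf.inj (by dsimp; omega) (by dsimp; omega) (h.trans hfs1.symm)
      exact hs21 (Prod.mk.inj this).1
    omega
  have hXr : ∀ c, c ≠ r → ¬ X c := fun c h h' => h h'.1
  have hs1r : s₁ ≠ r := by rintro rfl; omega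
  have hs2r : s₂ ≠ r := by rintro rfl; omega
  have hs1z : s₁ ≠ z := by rintro rfl; exact hbb _ hzs hs1s
  have hs2z : s₂ ≠ z := by rintro rfl; exact hbb _ hzs hs2s
  have hz0 : cls p len X (z, 0) ≤ 1 := leaf_cls hc hzp
  -- three missing edges
  have hQ3 : ∀ e ∈ ({(s₁, 0), (s₂, 0), (z, 0)} : Finset (C × ℕ)),
      e.2 < len e.1 ∧ cls p len X e ≤ 1 ∧ e.1 ≠ p ∧ ¬ X e.1 := by
    intro e he
    simp only [Finset.mem_insert, Finset.mem_singleton] at he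
    rcases he with rfl | rfl | rfl
    · exact ⟨by dsimp; omega, by rw [cls_pendant hs1p hl1], hs1p, hXr _ hs1r⟩
    · exact ⟨by dsimp; omega, by rw [cls_pendant hs2p hl2], hs2p, hXr _ hs2r⟩
    · exact ⟨by dsimp; omega, hz0, hzp, hXr _ hzr⟩
  have hQ3c : ({(s₁, 0), (s₂, 0), (z, 0)} : Finset (C × ℕ)).card = 3 := by
    rw [Finset.card_eq_three]
    exact ⟨_, _, _, by simp [hs21.symm], by simp [hs1z], by simp [hs2z], rfl⟩
  have hM3 : 3 ≤ M := by
    rw [← hQ3c]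
    apply Finset.card_le_card
    intro e he
    have := hQ3 e he
    simp only [Finset.mem_filter, mem_EE]
    exact ⟨this.1, this.2.1⟩
  have hrb : ¬ side r = b₀ := hbb r hrs
  by_cases hQ : ∃ x : C × ℕ, x.2 < len x.1 ∧ cls p len X x ≤ 1 ∧ x.1 ≠ p ∧ ¬ X x.1 ∧
      x ≠ (s₁, 0) ∧ x ≠ (s₂, 0) ∧ x ≠ (z, 0)
  · obtain ⟨x, hx1, hx2, hx3, hx4, hx5, hx6, hx7⟩ := hQ
    have hQ4 : ∀ e ∈ (insert x ({(s₁, 0), (s₂, 0), (z, 0)} : Finset (C × ℕ))),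
        e.2 < len e.1 ∧ cls p len X e ≤ 1 ∧ e.1 ≠ p ∧ ¬ X e.1 := by
      intro e he
      rcases Finset.mem_insert.1 he with rfl | he
      · exact ⟨hx1, hx2, hx3, hx4⟩
      · exact hQ3 e he
    have hQ4c : (insert x ({(s₁, 0), (s₂, 0), (z, 0)} : Finset (C × ℕ))).card = 4 := by
      rw [Finset.card_insert_of_notMem, hQ3c]
      simp only [Finset.mem_insert, Finset.mem_singleton]
      tauto
    have hL : ∀ c i, i < len c → i % 2 = 1 → (c = p ∨ X c) → f (c, i) + 4 ≤ 2 * M + 1 := by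
      intro c i hi hi2 hcX
      rw [← hQ4c]
      exact fr_L_le hc hi hi2 hcX _ hQ4
    have hM4 : 4 ≤ M := by
      rw [← hQ4c]
      apply Finset.card_le_card
      intro e he
      have := hQ4 e he
      simp only [Finset.mem_filter, mem_EE]
      exact ⟨this.1, this.2.1⟩
    have hd1 : ∀ c i, i + 1 < len c → f (c, i) + f (c, i + 1) < cs p len side f b₀ (jend p len b₀) := by
      refine hf.dom_poor hc hs1p hs2p hs21.symm hs1s hs2s hl1 hl2 hfj0 ?_ ?_
      · intro c i hi hi2 hcX
        have := hL c i hi hi2 hcX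
        omega
      · intro c i hi h0
        have : f (c, i) ≤ M := fr_le_MM hc (by omega)
        omega
    have hd2 := hdomrich f hf (fun j => Or.inl rfl) le_rfl le_rfl
    by_cases hne : cs p len side f b₀ (jend p len b₀) = cs p len side f (!b₀) (jend p len (!b₀))
    swap
    · exact ⟨f, hf.good' hc r hr2 b₀ hd1 hd2 hne⟩
    -- tuning
    have hr0s : f (r, 0) < f (s, 0) := by
      apply rk_lt (by simp; omega)
      rw [ky_lt, hr0, cls_pendant hsp hls]
      left; omega
    have hr0pos := hf.pos (e := (r, 0)) (by dsimp; omega)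
    have hsm := hf.le (e := (s, 0)) (by dsimp; omega)
    obtain ⟨⟨q, k⟩, hq, hqv⟩ := hf.bij.surjOn (show f (s, 0) - 1 ∈ Set.Icc 1 m from
      ⟨by omega, by omega⟩)
    have hq : k < len q := by simpa using hq
    have hqlt : ky p len X ρ (q, k) < ky p len X ρ (s, 0) :=
      (rk_lt_iff (ky_inj hc).injOn (by simpa using hq) (by simp; omega)).1
        (show f (q, k) < f (s, 0) by omega)
    have hqP : q ∉ P := by
      intro h
      have h1 := hsmin q h
      obtain ⟨h2, h3⟩ := (memP q).1 h
      have h4 := hpoor q h2 h3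
      rw [ky_lt, cls_pendant h2 h4, cls_pendant hsp hls] at hqlt
      dsimp only at hqlt
      omega
    have hqcls : cls p len X (q, k) ≤ 1 := by
      rw [ky_lt, cls_pendant hsp hls] at hqlt
      omega
    have hscls : cls p len X (s, 0) = 1 := cls_pendant hsp hls 0
    have hqs : q ≠ s := by
      rintro rfl
      exact hqP hsP
    let f' := f ∘ Equiv.swap (s, 0) (q, k)
    have f's : f' (s, 0) = f (q, k) := by simp [f']
    have f'q : f' (q, k) = f (s, 0) := by simp [f']
    have f'o : ∀ e, e ≠ (s, 0) → e ≠ (q, k) → f' e = f e := fun e h1 h2 => by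
      simp [f', Equiv.swap_apply_of_ne_of_ne h1 h2]
    have f'big : ∀ e, 2 ≤ cls p len X e → f' e = f e := fun e h => f'o e
      (by rintro rfl; omega) (by rintro rfl; omega)
    have f'ge : ∀ e, e ≠ (s, 0) → f e ≤ f' e := fun e h => by
      by_cases h' : e = (q, k)
      · rw [h', f'q]; omega
      · rw [f'o e h h']
    have f'small : ∀ e, cls p len X e ≤ 1 → ∃ e', cls p len X e' ≤ 1 ∧ f' e = f e' ∧
        (e.2 < len e.1 → e'.2 < len e'.1) := fun e h => by
      by_cases h1 : e = (s, 0)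
      · exact ⟨(q, k), hqcls, by rw [h1, f's], fun _ => hq⟩
      · by_cases h2 : e = (q, k)
        · exact ⟨(s, 0), by omega, by rw [h2, f'q], fun _ => by dsimp; omega⟩
        · exact ⟨e, h, f'o e h1 h2, id⟩
    have hf' : Mono p len X ρ f' := by
      refine ⟨swap_bij (by dsimp; omega) hq hf.bij, ?_, ?_⟩
      · intro e e' he he' hl hl' hlt
        have hes : e ≠ (s, 0) := by rintro rfl; dsimp at hl; omega
        have hes' : e' ≠ (s, 0) := by rintro rfl; dsimp at hl'; omega
        have hlt' := hf.h1 e e' he he' hl hl' hlt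
        have hge := f'ge e' hes'
        by_cases h : e = (q, k)
        · have h3 : f e' ≠ f (s, 0) := fun h4 =>
            hes' (hf.inj he' (by dsimp; omega) h4)
          rw [h, f'q]
          rw [h] at hlt'
          omega
        · rw [f'o e hes h]
          omega
      · intro e e' he he' h1 hl' h2
        rw [f'big e' h2]
        obtain ⟨e'', h3, h4, h5⟩ := f'small e h1
        rw [h4]
        exact hf.h2 e'' e' (h5 he) he' h3 hl' h2
    have hd1' : ∀ c i, i + 1 < len c → f' (c, i) + f' (c, i + 1) < cs p len side f' b₀ (jend p len b₀) := by
      have hs1' := f'ge (s₁, 0) (by rintro h; exact hss1 (Prod.mk.inj h).1.symm)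
      have hs2' : f (s₂, 0) ≤ f' (s₂, 0) + 1 := by
        by_cases h : s₂ = s
        · rw [h, f's]; omega
        · have := f'ge (s₂, 0) (fun h' => h (Prod.mk.inj h').1)
          omega
      refine hf'.dom_poor hc hs1p hs2p hs21.symm hs1s hs2s hl1 hl2 ?_ ?_ ?_
      · rw [f'big, hfj0]
        unfold jend
        split_ifs with h
        · rw [cls_p0]; omega
        · have h' : len p % 2 = 1 := by have := mt hb₀.2 h; omega
          have a : (len p - 1) % 2 = 0 := by omega
          have b : len p - 1 + 1 = len p := by omega
          simp [cls, a, b]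
      · intro c i hi hi2 hcX
        have := hL c i hi hi2 hcX
        rw [f'big (c, i) (by rw [cls_odd hi2 (by omega)])]
        omega
      · intro c i hi h0
        obtain ⟨e'', h3, h4, h5⟩ := f'small (c, i) (by omega)
        have : f e'' ≤ M := fr_le_MM hc h3
        omega
    have hd2' := hdomrich f' hf' (fun j => by
      by_cases h : cls p len X (p, j) ≤ 1
      · exact Or.inr h
      · exact Or.inl (f'big _ (by omega)))
      (f'ge _ (fun h => by
        have := (Prod.mk.inj h).1
        rw [this] at hrs
        exact hbb _ hrs hss))
      (f'ge _ (fun h => by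
        have := (Prod.mk.inj h).1
        rw [this] at hzs
        exact hbb _ hzs hss))
    refine ⟨f', hf'.good' hc r hr2 b₀ hd1' hd2' ?_⟩
    -- compare the sums
    have f'p : ∀ b, f' (p, jend p len b) = f (p, jend p len b) ∨ f (p, jend p len b) ≤ f' (p, jend p len b) := by
      intro b
      exact Or.inr (f'ge _ (fun h => hsp (Prod.mk.inj h).1.symm))
    have f'p0 : f' (p, jend p len b₀) = f (p, jend p len b₀) := by
      rcases f'p b₀ with h | h
      · exact h
      · have : f' (p, jend p len b₀) ≤ m := hf'.le (by
          unfold jend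
          dsimp only
          split_ifs <;> omega)
        omega
    have hsumP : ∑ c ∈ P, f' (c, len c - 1) + 1 = ∑ c ∈ P, f (c, len c - 1) := by
      have h1 : ∑ c ∈ P, (f' (c, len c - 1) + if c = s then 1 else 0) = ∑ c ∈ P, f (c, len c - 1) := by
        apply Finset.sum_congr rfl
        intro c hcP
        by_cases h : c = s
        · subst h
          simp only [hls, Nat.sub_self, if_true]
          omega
        · rw [f'o _ (fun h' => h (Prod.mk.inj h').1)
            (fun h' => hqP ((Prod.mk.inj h').1 ▸ hcP))]
          simp [h]
      rw [← h1, Finset.sum_add_distrib, Finset.sum_ite_eq', if_pos hsP]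
    have hsumR : ∑ c ∈ Finset.univ.filter (fun c => c ≠ p ∧ side c = (!b₀)), f (c, len c - 1)
        ≤ ∑ c ∈ Finset.univ.filter (fun c => c ≠ p ∧ side c = (!b₀)), f' (c, len c - 1) := by
      apply Finset.sum_le_sum
      intro c hcR
      simp only [Finset.mem_filter] at hcR
      apply f'ge
      intro h
      have := (Prod.mk.inj h).1
      rw [this] at hcR
      exact hbb _ hcR.2.2 hss
    have f'p1 : f (p, jend p len (!b₀)) ≤ f' (p, jend p len (!b₀)) := by
      rcases f'p (!b₀) with h | h
      · exact h.ge
      · exact h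
    unfold cs at hne ⊢
    rw [← hP] at hne ⊢
    omega
  · -- the special family
    have hcase : ∀ x : C × ℕ, x.2 < len x.1 → cls p len X x ≤ 1 → x.1 ≠ p → ¬ X x.1 →
        x = (s₁, 0) ∨ x = (s₂, 0) ∨ x = (z, 0) := by
      intro x h1 h2 h3 h4
      by_contra hcon
      exact hQ ⟨x, h1, h2, h3, h4, fun h => hcon (Or.inl h), fun h => hcon (Or.inr (Or.inl h)), fun h => hcon (Or.inr (Or.inr h))⟩
    have hall : ∀ c, c = p ∨ c = s₁ ∨ c = s₂ ∨ c = r ∨ c = z := by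
      intro c
      by_cases h1 : c = p
      · exact Or.inl h1
      by_cases h2 : c = r
      · exact Or.inr (Or.inr (Or.inr (Or.inl h2)))
      have := hcase (c, 0) (hlen c) (leaf_cls hc h1) h1 (hXr c h2)
      simp only [Prod.mk.injEq] at this
      rcases this with h | h | h
      · exact Or.inr (Or.inl h.1)
      · exact Or.inr (Or.inr (Or.inl h.1))
      · exact Or.inr (Or.inr (Or.inr (Or.inr h.1)))
    have hXr' : X r := by
      by_contra hcon
      have := hcase (r, 0) (hlen r) (leaf_cls hc hrp) hrp hcon
      simp only [Prod.mk.injEq] at this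
      rcases this with h | h | h
      · exact hs1r h.1.symm
      · exact hs2r h.1.symm
      · exact hzr h.1.symm
    have hr3 := hX r hXr'
    have hz1 : len z = 1 := by
      by_contra hcon
      have hodd : len z % 2 = 1 := by
        rcases hrc with h | h
        · have := hXr'.2
          omega
        · exact h.2 z hzp hzs
      have hcl : cls p len X (z, 2) = 0 := by
        have h1 := hXr z hzr
        simp [cls, hzp, hcon, h1]
      have := hcase (z, 2) (by dsimp; omega) (by omega) hzp (hXr z hzr)
      simp at this
    by_cases hexc : len p = 2 ∧ len r = 3
    · have hb : b₀ = true := hb₀.2 (by omega)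
      rw [hb] at hs1s hs2s hrs hzs
      exact exception hall hs1p hs2p hrp hzp hs21.symm hzr.symm hs1s hs2s hrs hzs hl1 hl2 hz1
        hexc.2 hexc.1
    have hL : ∀ c i, i < len c → i % 2 = 1 → (c = p ∨ X c) → f (c, i) + 3 ≤ 2 * M + 1 := by
      intro c i hi hi2 hcX
      rw [← hQ3c]
      exact fr_L_le hc hi hi2 hcX _ hQ3
    have hd1 : ∀ c i, i + 1 < len c → f (c, i) + f (c, i + 1) < cs p len side f b₀ (jend p len b₀) := by
      refine hf.dom_poor hc hs1p hs2p hs21.symm hs1s hs2s hl1 hl2 hfj0 ?_ ?_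
      · intro c i hi hi2 hcX
        have := hL c i hi hi2 hcX
        omega
      · intro c i hi h0
        have : f (c, i) ≤ M := fr_le_MM hc (by omega)
        omega
    have hd2 := hdomrich f hf (fun j => Or.inl rfl) le_rfl le_rfl
    refine ⟨f, hf.good' hc r hr2 b₀ hd1 hd2 ?_⟩
    have hP2 : P = {s₁, s₂} := by
      ext c
      simp only [Finset.mem_insert, Finset.mem_singleton]
      constructor
      · intro h
        obtain ⟨h1, h2⟩ := (memP c).1 h
        rcases hall c with h3 | h3 | h3 | h3 | h3
        · exact absurd h3 h1
        · exact Or.inl h3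
        · exact Or.inr h3
        · rw [h3] at h2; exact absurd h2 hrb
        · rw [h3] at h2; exact absurd h2 (hbb z hzs)
      · rintro (rfl | rfl) <;> assumption
    have hcs0 : cs p len side f b₀ (jend p len b₀) = m + (f (s₁, 0) + f (s₂, 0)) := by
      unfold cs
      rw [← hP, hP2, Finset.sum_pair hs21.symm, hfj0, hl1, hl2]
    have hcs1 := cs_ge (g := f) (len := len) hrp hzp hzr.symm hrs hzs (jend p len (!b₀))
    have hfz' : M ≤ f (z, len z - 1) + 2 := by
      refine (MM_le_fr hc (e := (z, len z - 1)) {(s₁, 0), (s₂, 0)} (fun e he h1 hk => ?_)).trans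
        (Nat.add_le_add_left Finset.card_le_two _)
      obtain ⟨c, i⟩ := e
      rw [ky_lt, cls_pendant hzp hz1] at hk
      have c1 : cls p len X (c, i) = 1 := by omega
      obtain ⟨hp', hl'⟩ := cls_one c1
      dsimp only at he hk
      have hi : i = 0 := by omega
      subst hi
      have hcz : c ≠ z := by
        rintro rfl
        omega
      have hcr : c ≠ r := by
        rintro rfl
        omega
      simp only [Finset.mem_insert, Finset.mem_singleton, Prod.mk.injEq, and_true]
      have := hall c
      tauto
    -- many large edges
    have cr1 : cls p len X (r, 1) = 2 := cls_odd (by omega) hr2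
    have crt : cls p len X (r, len r - 1) = 3 := cls_top_X hc hXr'
    have cp0 : cls p len X (p, 0) = 3 := cls_p0
    have hrp' : p ≠ r := hrp.symm
    suffices h : m + (f (s₁, 0) + f (s₂, 0)) <
        f (p, jend p len (!b₀)) + (f (r, len r - 1) + f (z, len z - 1)) by omega
    by_cases hp1 : len p = 1
    · have hb : b₀ = false := by
        cases hb : b₀
        · rfl
        · have := hb₀.1 hb
          omega
      have hj : jend p len (!b₀) = 0 := by rw [hb]; simp [jend]
      have h1 := hfr' (Or.inr hp1)
      have h2 : f (p, 0) = m := fr_p0_even hc (Or.inr hp1)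
      have h3 := MM_add_le (p := p) (X := X) (len := len) {(p, 0), (r, 1), (r, len r - 1)} (by
        intro e he
        simp only [Finset.mem_insert, Finset.mem_singleton] at he
        rcases he with rfl | rfl | rfl
        · exact ⟨by dsimp; omega, by omega⟩
        · exact ⟨by dsimp; omega, by omega⟩
        · exact ⟨by dsimp; omega, by omega⟩)
      have h4 : ({(p, 0), (r, 1), (r, len r - 1)} : Finset (C × ℕ)).card = 3 := by
        rw [Finset.card_eq_three]
        exact ⟨_, _, _, by simp [hrp'], by simp [hrp'], by simp; omega, rfl⟩
      rw [hj]
      omega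
    · have cp1 : cls p len X (p, 1) = 2 := cls_odd (by omega) (by omega)
      have h4 : ({(p, 0), (p, 1), (r, 1), (r, len r - 1)} : Finset (C × ℕ)).card = 4 := by
        rw [Finset.card_insert_of_notMem, Finset.card_eq_three.2
          ⟨_, _, _, by simp [hrp'], by simp [hrp'], by simp; omega, rfl⟩]
        simp [hrp']
      have h5 : ∀ y : C × ℕ, y.2 < len y.1 → 2 ≤ cls p len X y → y ≠ (p, 0) → y ≠ (p, 1) → y ≠ (r, 1) →
          y ≠ (r, len r - 1) → M + 5 ≤ m := by
        intro y y1 y2 y3 y4 y5 y6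
        have h3 := MM_add_le (p := p) (X := X) (len := len) (insert y {(p, 0), (p, 1), (r, 1), (r, len r - 1)}) (by
          intro e he
          simp only [Finset.mem_insert, Finset.mem_singleton] at he
          rcases he with rfl | rfl | rfl | rfl | rfl
          · exact ⟨y1, y2⟩
          · exact ⟨by dsimp; omega, by omega⟩
          · exact ⟨by dsimp; omega, by omega⟩
          · exact ⟨by dsimp; omega, by omega⟩
          · exact ⟨by dsimp; omega, by omega⟩)
        rw [Finset.card_insert_of_notMem (by
          simp only [Finset.mem_insert, Finset.mem_singleton]; tauto), h4] at h3
        exact h3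
      by_cases hp : len p % 2 = 0
      · have hb : b₀ = true := hb₀.2 hp
        have hj : jend p len (!b₀) = len p - 1 := by rw [hb]; simp [jend]
        have h6 : M + 5 ≤ m := by
          by_cases hp2 : len p = 2
          · refine h5 (r, 3) (by dsimp; omega) (by rw [cls_odd (by omega) hr2]) ?_ ?_ ?_ ?_
            · simp [hrp]
            · simp [hrp]
            · simp
            · simp; omega
          · refine h5 (p, 3) (by dsimp; omega) (by rw [cls_odd (by omega) (by omega)]) ?_ ?_ ?_ ?_
            · simp
            · simp
            · simp [hrp']
            · simp [hrp']
        have h7 : m ≤ f (p, len p - 1) + 2 := by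
          rw [hm, ← card_EE]
          refine (rk_ge_of_above {(p, 0), (r, len r - 1)} (fun e he h => ?_)).trans
            (Nat.add_le_add_left Finset.card_le_two _)
          obtain ⟨c, i⟩ := e
          have he : i < len c := by simpa using he
          rw [ky_lt, cls_odd (by omega) (by omega)] at h
          dsimp only at h
          have h3 := cls_le (p := p) (len := len) (X := X) (c, i)
          simp only [Finset.mem_insert, Finset.mem_singleton]
          by_cases c3 : cls p len X (c, i) = 3
          · by_cases hcp : c = p
            · subst hcp
              left
              have := cls_three_p c3
              congr 1
              omega
            · obtain ⟨x1, x2⟩ := cls_three' hc c3 hcp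
              have hcr : c = r := x1.1
              subst hcr
              right
              congr 1
              omega
          · exfalso
            have c2 : cls p len X (c, i) = 2 := by omega
            have hi := cls_two c2
            rcases hall c with h8 | h8 | h8 | h8 | h8
            · subst h8; omega
            · subst h8; omega
            · subst h8; omega
            · subst h8
              have := hc.rX _ hXr'
              omega
            · subst h8; omega
        have h8 := hfr' (Or.inl hp)
        rw [hj]
        omega
      · have hb : b₀ = false := by
          cases hb : b₀
          · rfl
          · exact absurd (hb₀.1 hb) hp
        have hj : jend p len (!b₀) = 0 := by rw [hb]; simp [jend]
        have h6 : M + 5 ≤ m := by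
          refine h5 (p, len p - 1) (by dsimp; omega) ?_ ?_ ?_ ?_ ?_
          · have a : (len p - 1) % 2 = 0 := by omega
            have b : len p - 1 + 1 = len p := by omega
            simp [cls, a, b]
          · simp; omega
          · simp; omega
          · simp [hrp']
          · simp [hrp']
        have h7 : m ≤ f (p, 0) + 1 := fr_p0_odd hc
        rw [hj]
        omega

end
end model

section model
variable {C : Type*} [Fintype C]
section
variable {p : C} {len : C → ℕ} {side : C → Bool}

/-- the labeling when all legs are single edges -/
def gP (p : C) (h N : ℕ) (idx : C → ℕ) (e : C × ℕ) : ℕ :=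
  if e.1 = p then (if e.2 % 2 = 0 then h + N + 1 + e.2 / 2 else (e.2 + 1) / 2) else h + 1 + idx e.1

lemma gP_p (h N : ℕ) (idx : C → ℕ) (i : ℕ) :
    gP p h N idx (p, i) = if i % 2 = 0 then h + N + 1 + i / 2 else (i + 1) / 2 := by
  simp [gP]

lemma gP_c (h N : ℕ) (idx : C → ℕ) {c : C} (hc : c ≠ p) (i : ℕ) :
    gP p h N idx (c, i) = h + 1 + idx c := by
  simp [gP, hc]

lemma gP_good (hlen : ∀ c, 1 ≤ len c)
    (hs : ∀ b, ∃ c c', c ≠ c' ∧ c ≠ p ∧ c' ≠ p ∧ side c = b ∧ side c' = b)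
    (hpoor : ∀ c, c ≠ p → len c = 1) (N : ℕ) (hN : ∑ c, len c = len p + N)
    (idx : C → ℕ) (hinj : ∀ c c', c ≠ p → c' ≠ p → idx c = idx c' → c = c')
    (hlt : ∀ c, c ≠ p → idx c < N) (t : C) (htp : t ≠ p) (hts : side t = false)
    (ht : idx t + 1 = N)
    (hne : cs p len side (gP p (len p / 2) N idx) true 0
      ≠ cs p len side (gP p (len p / 2) N idx) false (len p - 1)) :
    Good p len side (gP p (len p / 2) N idx) := by
  set g := gP p (len p / 2) N idx with hg
  have hlp := hlen p
  have hcp : ∀ c i, i < len c → c ≠ p → i = 0 := by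
    intro c i hi hc
    have := hpoor c hc
    omega
  have hpp : ∀ c i, i + 1 < len c → c = p := by
    intro c i hi
    by_contra hc
    have := hpoor c hc
    omega
  have hpair : ∀ i, g (p, i) + g (p, i + 1) = len p / 2 + N + 2 + i := by
    intro i
    rw [hg, gP_p, gP_p]
    split_ifs <;> omega
  have hleaf : ∀ c, c ≠ p → g (c, 0) ≤ len p / 2 + N := by
    intro c hc
    rw [hg, gP_c _ _ _ hc]
    have := hlt c hc
    omega
  -- center sums
  have hct : len p / 2 + N + len p + 1 ≤ cs p len side g true 0 := by
    obtain ⟨c, c', h1, h2, h3, h4, h5⟩ := hs true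
    have := cs_ge (g := g) (len := len) h2 h3 h1 h4 h5 0
    have h6 : idx c ≠ idx c' := fun h => h1 (hinj c c' h2 h3 h)
    rw [hg, gP_p, gP_c _ _ _ h2, gP_c _ _ _ h3] at this
    rw [hg]
    simp at this
    omega
  have hcf : len p / 2 + N + len p + 1 ≤ cs p len side g false (len p - 1) := by
    obtain ⟨c, h1, h2, h3⟩ := other_leg (hs false) t
    have := cs_ge (g := g) (len := len) htp h2 (Ne.symm h1) hts h3 (len p - 1)
    rw [hg, gP_p, gP_c _ _ _ htp, gP_c _ _ _ h2] at this
    rw [hg]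
    split_ifs at this <;> omega
  have hI : Set.InjOn g (EE len) := by
    rintro ⟨c, i⟩ h1 ⟨c', i'⟩ h2 h
    simp only [Finset.mem_coe, mem_EE] at h1 h2
    by_cases hc : c = p
    · subst hc
      by_cases hc' : c' = c
      · subst hc'
        rw [hg, gP_p, gP_p] at h
        have : i = i' := by split_ifs at h <;> omega
        rw [this]
      · exfalso
        have := hlt c' hc'
        rw [hg, gP_p, gP_c _ _ _ hc'] at h
        split_ifs at h <;> omega
    · have e1 := hcp c i h1 hc
      by_cases hc' : c' = p
      · exfalso
        subst hc'
        have := hlt c hc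
        rw [hg, gP_p, gP_c _ _ _ hc] at h
        split_ifs at h <;> omega
      · have e2 := hcp c' i' h2 hc'
        rw [hg, gP_c _ _ _ hc, gP_c _ _ _ hc'] at h
        rw [e1, e2, hinj c c' hc hc' (by omega)]
  have hM : Set.MapsTo g (EE len) (Set.Icc 1 (∑ c, len c)) := by
    rintro ⟨c, i⟩ h1
    simp only [Finset.mem_coe, mem_EE] at h1
    rw [hN]
    by_cases hc : c = p
    · subst hc
      rw [hg, gP_p]
      constructor <;> split_ifs <;> omega
    · have := hlt c hc
      rw [hg, gP_c _ _ _ hc]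
      constructor <;> omega
  refine ⟨⟨⟨hM, hI, ?_⟩, ?_, ?_⟩, ?_, ?_, ?_, ?_, hne⟩
  · have := Finset.surjOn_of_injOn_of_card_le (s := EE len) (t := Finset.Icc 1 (∑ c, len c)) g
      (by simpa using hM) hI (by simp [card_EE])
    simpa using this
  · intro c hc c' i hi
    have := hpp c' i hi
    subst this
    rw [hpair]
    have := hleaf c hc
    omega
  · intro c i c' i' hi hi' h
    have e1 := hpp c i hi
    have e2 := hpp c' i' hi'
    subst e1
    subst e2
    rw [hpair, hpair] at h
    exact ⟨rfl, by omega⟩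
  · intro c hc
    have := hleaf c hc
    omega
  · intro c hc
    have := hleaf c hc
    omega
  · intro c i hi
    have := hpp c i hi
    subst this
    rw [hpair]
    omega
  · intro c i hi
    have := hpp c i hi
    subst this
    rw [hpair]
    omega

lemma cs_swap (h N : ℕ) (idx : C → ℕ) {c₁ c₂ : C} (h₁ : c₁ ≠ p) (h₂ : c₂ ≠ p) {b : Bool}
    (hb₁ : side c₁ = b) (hb₂ : side c₂ ≠ b) (j : ℕ) :
    cs p len side (gP p h N (idx ∘ Equiv.swap c₁ c₂)) b j + idx c₁
      = cs p len side (gP p h N idx) b j + idx c₂ := by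
  have hm : c₁ ∈ Finset.univ.filter (fun c => c ≠ p ∧ side c = b) := by simp [h₁, hb₁]
  unfold cs
  rw [← Finset.add_sum_erase _ _ hm, ← Finset.add_sum_erase _ _ hm]
  have : ∑ x ∈ (Finset.univ.filter (fun c => c ≠ p ∧ side c = b)).erase c₁,
      gP p h N (idx ∘ Equiv.swap c₁ c₂) (x, len x - 1)
      = ∑ x ∈ (Finset.univ.filter (fun c => c ≠ p ∧ side c = b)).erase c₁,
      gP p h N idx (x, len x - 1) := by
    apply Finset.sum_congr rfl
    intro x hx
    simp only [Finset.mem_erase, Finset.mem_filter, Finset.mem_univ, true_and] at hx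
    rw [gP_c _ _ _ hx.2.1, gP_c _ _ _ hx.2.1, Function.comp,
      Equiv.swap_apply_of_ne_of_ne hx.1 (by rintro rfl; exact hb₂ hx.2.2)]
  rw [this, gP_c _ _ _ h₁, gP_c _ _ _ h₁, gP_p, gP_p]
  simp only [Function.comp, Equiv.swap_apply_left]
  omega

theorem casePP (hlen : ∀ c, 1 ≤ len c)
    (hs : ∀ b, ∃ c c', c ≠ c' ∧ c ≠ p ∧ c' ≠ p ∧ side c = b ∧ side c' = b)
    (hpoor : ∀ c, c ≠ p → len c = 1) : ∃ g, Good p len side g := by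
  obtain ⟨t, t', htt, htp, htp', hts, hts'⟩ := hs false
  obtain ⟨u, _, _, hup, _, hus, _⟩ := hs true
  set L := Finset.univ.filter (fun c : C => c ≠ p ∧ c ≠ t) with hL
  have hN : ∑ c, len c = len p + (L.card + 1) := by
    rw [← Finset.add_sum_erase _ _ (Finset.mem_univ p),
      ← Finset.add_sum_erase (Finset.univ.erase p) _ (a := t) (by simp [htp]), hpoor t htp]
    have : (Finset.univ.erase p).erase t = L := by
      ext c
      simp [hL]
      tauto
    rw [this, Finset.sum_congr rfl (g := fun _ => 1)]
    · simp; omega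
    · intro x hx
      simp [hL] at hx
      exact hpoor x hx.1
  set idx : C → ℕ := fun c => if h : c ∈ L then (L.equivFin ⟨c, h⟩ : ℕ) else L.card with hidx
  have htL : t ∉ L := by simp [hL]
  have hmem : ∀ c, c ≠ p → c ∉ L → c = t := by
    intro c hc h
    simp [hL] at h
    exact h hc
  have hlt' : ∀ c, c ∈ L → idx c < L.card := by
    intro c h
    simp only [hidx, h, dif_pos]
    exact Fin.is_lt _
  have ht : idx t = L.card := by simp [hidx, htL]
  have hinj : ∀ c c', c ≠ p → c' ≠ p → idx c = idx c' → c = c' := by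
    intro c c' hc hc' h
    by_cases h1 : c ∈ L
    · by_cases h2 : c' ∈ L
      · simp only [hidx, h1, h2, dif_pos] at h
        simpa using L.equivFin.injective (Fin.ext h)
      · rw [hmem c' hc' h2, ht] at h
        exact absurd (hlt' c h1) (by omega)
    · by_cases h2 : c' ∈ L
      · rw [hmem c hc h1, ht] at h
        exact absurd (hlt' c' h2) (by omega)
      · rw [hmem c hc h1, hmem c' hc' h2]
  have hlt : ∀ c, c ≠ p → idx c < L.card + 1 := by
    intro c hc
    by_cases h1 : c ∈ L
    · have := hlt' c h1
      omega
    · rw [hmem c hc h1, ht]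
      omega
  by_cases hne : cs p len side (gP p (len p / 2) (L.card + 1) idx) true 0
      = cs p len side (gP p (len p / 2) (L.card + 1) idx) false (len p - 1)
  · refine ⟨_, gP_good hlen hs hpoor (L.card + 1) hN (idx ∘ Equiv.swap u t') ?_ ?_ t htp hts ?_ ?_⟩
    · have hsw : ∀ c, c ≠ p → Equiv.swap u t' c ≠ p := by
        intro c hc
        rw [Equiv.swap_apply_def]
        split_ifs <;> assumption
      intro c c' hc hc' h
      exact (Equiv.swap u t').injective (hinj _ _ (hsw c hc) (hsw c' hc') h)
    · intro c hc
      apply hlt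
      rw [Equiv.swap_apply_def]
      split_ifs <;> assumption
    · rw [Function.comp, Equiv.swap_apply_of_ne_of_ne (by rintro rfl; simp [hts] at hus) htt, ht]
    · have hut : u ≠ t' := by rintro rfl; simp [hts'] at hus
      have h1 := cs_swap (len := len) (side := side) (len p / 2) (L.card + 1) idx hup htp' hus
        (by simp [hts']) 0
      have h2 := cs_swap (len := len) (side := side) (len p / 2) (L.card + 1) idx htp' hup hts'
        (by simp [hus]) (len p - 1)
      rw [Equiv.swap_comm] at h2
      have h3 : idx u ≠ idx t' := fun h => hut (hinj _ _ hup htp' h)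
      omega
  · exact ⟨_, gP_good hlen hs hpoor (L.card + 1) hN idx hinj hlt t htp hts (by omega) hne⟩

theorem core (hlen : ∀ c, 1 ≤ len c)
    (hs : ∀ b, ∃ c c', c ≠ c' ∧ c ≠ p ∧ c' ≠ p ∧ side c = b ∧ side c' = b) :
    ∃ g, Good p len side g := by
  by_cases hR : ∀ b, ∃ c, c ≠ p ∧ side c = b ∧ 2 ≤ len c
  · obtain ⟨g, hg | hg⟩ := caseR hlen hs hR
    · exact ⟨g, hg⟩
    · exact ⟨_, hg.rev hlen⟩
  push Not at hR
  obtain ⟨b, hb⟩ := hR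
  have hb' : ∀ c, c ≠ p → side c = b → len c = 1 := by
    intro c h1 h2
    have := hb c h1 h2
    have := hlen c
    omega
  by_cases hr : ∃ c, c ≠ p ∧ side c = (!b) ∧ 2 ≤ len c
  · by_cases h : b = true ↔ len p % 2 = 0
    · exact caseP hlen b h hs hb' hr
    · obtain ⟨g, hg⟩ := caseP (side := fun c => !side c) hlen (!b) (by cases b <;> simp at h ⊢ <;> omega)
        (by
          intro b'
          obtain ⟨c, c', h1, h2, h3, h4, h5⟩ := hs (!b')
          exact ⟨c, c', h1, h2, h3, by simp [h4], by simp [h5]⟩)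
        (by
          intro c h1 h2
          exact hb' c h1 (by simpa using h2))
        (by
          obtain ⟨c, h1, h2, h3⟩ := hr
          exact ⟨c, h1, by simp [h2], h3⟩)
      exact ⟨_, hg.rev hlen⟩
  · push Not at hr
    refine casePP hlen hs ?_
    intro c hc
    by_cases h : side c = b
    · exact hb' c hc h
    · have := hr c hc (by cases b <;> simpa using h)
      have := hlen c
      omega

end
end model

section rooted
variable {V : Type*} [Fintype V]

/-- The children of `w` in the tree rooted at `u`. -/
def chl (u : V) (par : V → V) (w : V) : Finset V :=
  Finset.univ.filter (fun x => x ≠ u ∧ par x = w)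

lemma mem_chl {u : V} {par : V → V} {w x : V} : x ∈ chl u par w ↔ x ≠ u ∧ par x = w := by
  simp [chl]

lemma reach {u : V} {par : V → V} {d : V → ℕ} (hd : ∀ w, w ≠ u → d (par w) < d w) (n : ℕ) :
    ∀ w, d w ≤ n → ∃ k, par^[k] w = u := by
  induction n with
  | zero =>
    intro w hw
    by_cases h : w = u
    · exact ⟨0, h⟩
    · have := hd w h
      omega
  | succ n ih =>
    intro w hw
    by_cases h : w = u
    · exact ⟨0, h⟩
    · have := hd w h
      obtain ⟨k, hk⟩ := ih (par w) (by omega)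
      exact ⟨k + 1, by rw [Function.iterate_succ_apply]; exact hk⟩

theorem rooted (u v : V) (huv : u ≠ v) (par : V → V) (d : V → ℕ)
    (hd : ∀ w, w ≠ u → d (par w) < d w) (hu : 3 ≤ (chl u par u).card)
    (hv : 2 ≤ (chl u par v).card)
    (hw : ∀ w, w ≠ u → w ≠ v → (chl u par w).card ≤ 1) :
    ∃ F : V → ℕ, Set.BijOn F {w | w ≠ u} (Set.Icc 1 (Fintype.card V - 1)) ∧
      Function.Injective (fun w => (if w = u then 0 else F w) + ∑ x ∈ chl u par w, F x) := by
  let C := {c : V // c ≠ u ∧ (chl u par c = ∅ ∨ c = v)}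
  have hex : ∀ c : C, ∃ k, 1 ≤ k ∧ (par^[k] c.1 = u ∨ par^[k] c.1 = v) := by
    intro c
    obtain ⟨k, hk⟩ := reach hd (d c.1) c.1 le_rfl
    refine ⟨k, ?_, Or.inl hk⟩
    rcases k with _ | k
    · exact absurd hk c.2.1
    · omega
  let len : C → ℕ := fun c => Nat.find (hex c)
  have hlen : ∀ c, 1 ≤ len c := fun c => (Nat.find_spec (hex c)).1
  have htop : ∀ c : C, par^[len c] c.1 = u ∨ par^[len c] c.1 = v := fun c => (Nat.find_spec (hex c)).2
  have hmid : ∀ (c : C) i, 1 ≤ i → i < len c → par^[i] c.1 ≠ u ∧ par^[i] c.1 ≠ v := by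
    intro c i h1 h2
    have := Nat.find_min (hex c) h2
    tauto
  have hneu : ∀ (c : C) i, i < len c → par^[i] c.1 ≠ u := by
    intro c i h
    rcases i with _ | i
    · exact c.2.1
    · exact (hmid c (i + 1) (by omega) h).1
  have hchild : ∀ (c : C) i, i < len c → par^[i] c.1 ∈ chl u par (par^[i + 1] c.1) := by
    intro c i h
    rw [mem_chl]
    exact ⟨hneu c i h, (Function.iterate_succ_apply' par i c.1).symm⟩
  have hdep : ∀ (c : C) i, i < len c → d (par^[i + 1] c.1) < d c.1 := by
    intro c i
    induction i with
    | zero => intro h; exact hd _ (hneu c 0 h)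
    | succ i ih =>
      intro h
      rw [Function.iterate_succ_apply']
      exact (hd _ (hneu c (i + 1) h)).trans (ih (by omega))
  let ψ : C × ℕ → V := fun e => par^[e.2] e.1.1
  have hinj' : ∀ i j (c c' : C), i < len c → j < len c' → par^[i] c.1 = par^[j] c'.1 →
      c = c' ∧ i = j := by
    have h0 : ∀ j (c c' : C), j < len c' → c.1 = par^[j] c'.1 → c = c' ∧ 0 = j := by
      intro j c c' hj h
      rcases j with _ | j
      · exact ⟨Subtype.ext h, rfl⟩
      · exfalso
        have h1 := hmid c' (j + 1) (by omega) hj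
        have h2 := hchild c' j (by omega)
        rw [← h] at h1 h2
        rcases c.2.2 with h3 | h3
        · rw [h3] at h2
          simp at h2
        · exact h1.2 h3
    intro i
    induction i with
    | zero => exact fun j c c' _ hj h => h0 j c c' hj h
    | succ i ih =>
      intro j c c' hi hj h
      rcases j with _ | j
      · obtain ⟨h1, h2⟩ := h0 (i + 1) c' c hi h.symm
        exact ⟨h1.symm, h2.symm⟩
      · have h1 := hmid c (i + 1) (by omega) hi
        have h2 := hchild c i (by omega)
        have h3 := hchild c' j (by omega)
        rw [← h] at h3
        have h4 := Finset.card_le_one.1 (hw _ h1.1 h1.2) _ h2 _ h3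
        obtain ⟨h5, h6⟩ := ih j c c' (by omega) (by omega) h4
        exact ⟨h5, by omega⟩
  have hsurj : ∀ w, w ≠ u → ∃ (c : C) (i : ℕ), i < len c ∧ par^[i] c.1 = w := by
    have : ∀ n w, (∑ x, d x) - d w ≤ n → w ≠ u → ∃ (c : C) (i : ℕ), i < len c ∧ par^[i] c.1 = w := by
      intro n
      induction n with
      | zero =>
        intro w hn hwu
        by_cases h : chl u par w = ∅ ∨ w = v
        · exact ⟨⟨w, hwu, h⟩, 0, hlen _, rfl⟩
        · exfalso
          push Not at h
          obtain ⟨x, hx⟩ := h.1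
          rw [mem_chl] at hx
          have h1 := hd x hx.1
          rw [hx.2] at h1
          have h2 := Finset.single_le_sum (f := d) (fun _ _ => Nat.zero_le _) (Finset.mem_univ x)
          omega
      | succ n ih =>
        intro w hn hwu
        by_cases h : chl u par w = ∅ ∨ w = v
        · exact ⟨⟨w, hwu, h⟩, 0, hlen _, rfl⟩
        · push Not at h
          obtain ⟨x, hx⟩ := h.1
          rw [mem_chl] at hx
          have h1 := hd x hx.1
          rw [hx.2] at h1
          have h2 := Finset.single_le_sum (f := d) (fun _ _ => Nat.zero_le _) (Finset.mem_univ x)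
          obtain ⟨c, i, hi, hc⟩ := ih x (by omega) hx.1
          have h3 : par^[i + 1] c.1 = w := by
            rw [Function.iterate_succ_apply', hc, hx.2]
          refine ⟨c, i + 1, ?_, h3⟩
          by_contra h4
          have h5 : len c = i + 1 := by omega
          have h6 := htop c
          rw [h5, h3] at h6
          rcases h6 with h6 | h6
          · exact hwu h6
          · exact h.2 h6
    exact fun w hwu => this _ w le_rfl hwu
  have hψ : Set.BijOn ψ (EE len) {w | w ≠ u} := by
    refine ⟨?_, ?_, ?_⟩
    · rintro ⟨c, i⟩ h
      simp only [Finset.mem_coe, mem_EE] at h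
      exact hneu c i h
    · rintro ⟨c, i⟩ h ⟨c', i'⟩ h' he
      simp only [Finset.mem_coe, mem_EE] at h h'
      obtain ⟨h1, h2⟩ := hinj' i i' c c' h h' he
      rw [h1, h2]
    · intro w hwu
      obtain ⟨c, i, h1, h2⟩ := hsurj w hwu
      exact ⟨(c, i), by simpa using h1, h2⟩
  have hcard : ∑ c, len c = Fintype.card V - 1 := by
    rw [← card_EE]
    have h1 : (EE len).card = (Finset.univ.erase u).card := by
      apply Finset.card_bij (fun e _ => ψ e)
      · intro e he
        simpa using hψ.mapsTo he
      · intro e he e' he' h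
        exact hψ.injOn he he' h
      · intro w hwu
        obtain ⟨e, he, h⟩ := hψ.surjOn (show w ∈ {w | w ≠ u} by simpa using hwu)
        exact ⟨e, he, h⟩
    rw [h1, Finset.card_erase_of_mem (Finset.mem_univ u), Finset.card_univ]
  -- sums over the children of a center
  have hsum : ∀ (t : V), (t = u ∨ t = v) → ∀ F : V → ℕ, ∑ x ∈ chl u par t, F x
      = ∑ c ∈ Finset.univ.filter (fun c : C => par^[len c] c.1 = t), F (par^[len c - 1] c.1) := by
    intro t ht F
    symm
    apply Finset.sum_bij (fun c _ => par^[len c - 1] c.1)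
    · intro c hc
      simp only [Finset.mem_filter, Finset.mem_univ, true_and] at hc
      have h1 := hlen c
      have := hchild c (len c - 1) (by omega)
      rwa [show len c - 1 + 1 = len c by omega, hc] at this
    · intro c _ c' _ h
      have h1 := hlen c
      have h2 := hlen c'
      exact (hinj' _ _ c c' (by omega) (by omega) h).1
    · intro x hx
      rw [mem_chl] at hx
      obtain ⟨c, i, hi, hc⟩ := hsurj x hx.1
      have h3 : par^[i + 1] c.1 = t := by
        rw [Function.iterate_succ_apply', hc, hx.2]
      have h4 : len c = i + 1 := by
        by_contra h4
        have := hmid c (i + 1) (by omega) (by omega)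
        rw [h3] at this
        tauto
      refine ⟨c, by simp [h4, h3], ?_⟩
      rw [h4]
      exact hc
    · intro c _
      rfl
  have hvu : v ≠ u := huv.symm
  let p : C := ⟨v, hvu, Or.inr rfl⟩
  let side : C → Bool := fun c => decide (par^[len c] c.1 = v)
  have hptop : par^[len p] p.1 = u := by
    rcases htop p with h | h
    · exact h
    · exfalso
      have h1 := hlen p
      have h2 := hdep p (len p - 1) (by omega)
      rw [show len p - 1 + 1 = len p by omega, h] at h2
      exact lt_irrefl _ h2
  have hft : Finset.univ.filter (fun c : C => par^[len c] c.1 = v)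
      = Finset.univ.filter (fun c => c ≠ p ∧ side c = true) := by
    ext c
    simp only [Finset.mem_filter, Finset.mem_univ, true_and, side, decide_eq_true_eq]
    constructor
    · intro h
      refine ⟨?_, h⟩
      rintro rfl
      exact hvu (h.symm.trans hptop)
    · exact fun h => h.2
  have hff : Finset.univ.filter (fun c : C => par^[len c] c.1 = u)
      = insert p (Finset.univ.filter (fun c => c ≠ p ∧ side c = false)) := by
    ext c
    simp only [Finset.mem_filter, Finset.mem_univ, true_and, side, decide_eq_false_iff_not,
      Finset.mem_insert]
    constructor
    · intro h
      by_cases hc : c = p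
      · exact Or.inl hc
      · exact Or.inr ⟨hc, fun h' => huv (h.symm.trans h')⟩
    · rintro (h | h)
      · rw [h]; exact hptop
      · rcases htop c with h' | h'
        · exact h'
        · exact absurd h' h.2
  have hpn : p ∉ Finset.univ.filter (fun c => c ≠ p ∧ side c = false) := by simp
  have hs : ∀ b, ∃ c c', c ≠ c' ∧ c ≠ p ∧ c' ≠ p ∧ side c = b ∧ side c' = b := by
    have key : ∀ b, 1 < (Finset.univ.filter (fun c => c ≠ p ∧ side c = b)).card := by
      intro b
      cases b
      · have := hsum u (Or.inl rfl) (fun _ => 1)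
        rw [hff, Finset.sum_insert hpn] at this
        simp only [Finset.sum_const, smul_eq_mul, mul_one] at this
        omega
      · have := hsum v (Or.inr rfl) (fun _ => 1)
        rw [hft] at this
        simp only [Finset.sum_const, smul_eq_mul, mul_one] at this
        omega
    intro b
    obtain ⟨c, hc, c', hc', hne⟩ := Finset.one_lt_card.1 (key b)
    simp only [Finset.mem_filter, Finset.mem_univ, true_and] at hc hc'
    exact ⟨c, c', hne, hc.1, hc'.1, hc.2, hc'.2⟩
  obtain ⟨g, hg⟩ := core (p := p) (side := side) hlen hs
  have : Nonempty (C × ℕ) := ⟨(p, 0)⟩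
  let F : V → ℕ := fun w => g (Function.invFunOn ψ (EE len) w)
  have hF : ∀ (c : C) i, i < len c → F (par^[i] c.1) = g (c, i) := by
    intro c i hi
    have := hψ.invOn_invFunOn.1 (show (c, i) ∈ (EE len : Set (C × ℕ)) by simpa using hi)
    show g (Function.invFunOn ψ (EE len) (ψ (c, i))) = g (c, i)
    rw [this]
  have hFb : Set.BijOn F {w | w ≠ u} (Set.Icc 1 (Fintype.card V - 1)) := by
    rw [← hcard]
    exact hg.ok.bij.comp (hψ.symm hψ.invOn_invFunOn.symm)
  refine ⟨F, hFb, ?_⟩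
  set S : V → ℕ := fun w => (if w = u then 0 else F w) + ∑ x ∈ chl u par w, F x with hS
  have hS1 : S u = cs p len side g false (len p - 1) := by
    simp only [hS, if_true, zero_add]
    rw [hsum u (Or.inl rfl), hff, Finset.sum_insert hpn, cs]
    have h1 := hlen p
    rw [hF p _ (by omega)]
    congr 1
    apply Finset.sum_congr (by ext c; simp only [Finset.mem_filter])
    intro c _
    have h1 := hlen c
    exact hF c _ (by omega)
  have hS2 : S v = cs p len side g true 0 := by
    simp only [hS, hvu, if_false]
    rw [hsum v (Or.inr rfl), hft, cs]
    have h1 := hlen p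
    have h2 := hF p 0 (by omega)
    rw [← h2]
    congr 1
    apply Finset.sum_congr (by ext c; simp only [Finset.mem_filter])
    intro c _
    have h1 := hlen c
    exact hF c _ (by omega)
  have hS3 : ∀ c : C, c ≠ p → S c.1 = g (c, 0) := by
    intro c hc
    have h1 : chl u par c.1 = ∅ := by
      rcases c.2.2 with h | h
      · exact h
      · exact absurd (Subtype.ext h) hc
    simp only [hS, c.2.1, if_false, h1, Finset.sum_empty, add_zero]
    exact hF c 0 (hlen c)
  have hS4 : ∀ (c : C) i, i + 1 < len c → S (par^[i + 1] c.1) = g (c, i) + g (c, i + 1) := by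
    intro c i hi
    have h1 := hmid c (i + 1) (by omega) hi
    have h2 := hchild c i (by omega)
    have h3 : chl u par (par^[i + 1] c.1) = {par^[i] c.1} := by
      apply Finset.eq_singleton_iff_unique_mem.2
      exact ⟨h2, fun x hx => Finset.card_le_one.1 (hw _ h1.1 h1.2) _ hx _ h2⟩
    simp only [hS, h1.1, if_false, h3, Finset.sum_singleton]
    rw [hF c (i + 1) hi, hF c i (by omega), add_comm]
  have hcases : ∀ w, w = u ∨ w = v ∨ (∃ c : C, c ≠ p ∧ w = c.1) ∨
      ∃ (c : C) (i : ℕ), i + 1 < len c ∧ w = par^[i + 1] c.1 := by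
    intro w
    by_cases h : w = u
    · exact Or.inl h
    obtain ⟨c, i, h1, h2⟩ := hsurj w h
    rcases i with _ | i
    · by_cases hc : c = p
      · right; left
        rw [← h2, hc]
        rfl
      · exact Or.inr (Or.inr (Or.inl ⟨c, hc, h2.symm⟩))
    · exact Or.inr (Or.inr (Or.inr ⟨c, i, h1, h2.symm⟩))
  intro w w' hww
  change S w = S w' at hww
  have hne := hg.ne
  rcases hcases w with rfl | rfl | ⟨c, hc, rfl⟩ | ⟨c, i, hi, rfl⟩ <;>
  rcases hcases w' with h | h | ⟨c', hc', h⟩ | ⟨c', i', hi', h⟩ <;> rw [h] at hww ⊢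
  · exact absurd (hS2.symm.trans (hww.symm.trans hS1)) hne
  · rw [hS1, hS3 c' hc'] at hww
    exact absurd hww (hg.leaff c' hc').ne'
  · rw [hS1, hS4 c' i' hi'] at hww
    exact absurd hww.symm (hg.pairf c' i' hi')
  · exact absurd (hS2.symm.trans (hww.trans hS1)) hne
  · rw [hS2, hS3 c' hc'] at hww
    exact absurd hww (hg.leaft c' hc').ne'
  · rw [hS2, hS4 c' i' hi'] at hww
    exact absurd hww.symm (hg.pairt c' i' hi')
  · rw [hS1, hS3 c hc] at hww
    exact absurd hww (hg.leaff c hc).ne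
  · rw [hS2, hS3 c hc] at hww
    exact absurd hww (hg.leaft c hc).ne
  · rw [hS3 c hc, hS3 c' hc'] at hww
    have := hg.ok.bij.injOn (show (c, 0) ∈ (EE len : Set (C × ℕ)) by simpa using Nat.lt_of_lt_of_le Nat.zero_lt_one (hlen c))
      (show (c', 0) ∈ (EE len : Set (C × ℕ)) by simpa using Nat.lt_of_lt_of_le Nat.zero_lt_one (hlen c')) hww
    rw [(Prod.mk.inj this).1]
  · rw [hS3 c hc, hS4 c' i' hi'] at hww
    exact absurd hww (hg.ok.leaf c hc c' i' hi').ne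
  · rw [hS1, hS4 c i hi] at hww
    exact absurd hww (hg.pairf c i hi)
  · rw [hS2, hS4 c i hi] at hww
    exact absurd hww (hg.pairt c i hi)
  · rw [hS3 c' hc', hS4 c i hi] at hww
    exact absurd hww (hg.ok.leaf c' hc' c i hi).ne'
  · rw [hS4 c i hi, hS4 c' i' hi'] at hww
    obtain ⟨h1, h2⟩ := hg.ok.pair c i c' i' hi hi' hww
    rw [h1, h2]

end rooted

section tree
variable {V : Type*} [Fintype V]

lemma exists_closer {G : SimpleGraph V} (hc : G.Connected) (u w : V) (h : w ≠ u) :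
    ∃ x, G.Adj w x ∧ G.dist x u < G.dist w u := by
  obtain ⟨q, hq⟩ := hc.exists_walk_length_eq_dist w u
  cases q with
  | nil => exact absurd rfl h
  | cons hadj q' =>
    refine ⟨_, hadj, ?_⟩
    rw [← hq, SimpleGraph.Walk.length_cons]
    exact Nat.lt_succ_of_le (SimpleGraph.dist_le q')

theorem exists_par {G : SimpleGraph V} (hT : G.IsTree) (u : V) :
    ∃ (par : V → V) (d : V → ℕ), (∀ w, w ≠ u → G.Adj w (par w) ∧ d (par w) < d w) ∧
      (∀ e ∈ G.edgeSet, ∃ w, w ≠ u ∧ e = s(w, par w)) ∧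
      (∀ w w', w ≠ u → w' ≠ u → s(w, par w) = s(w', par w') → w = w') := by
  have hex : ∀ w, ∃ x, w ≠ u → G.Adj w x ∧ G.dist x u < G.dist w u := by
    intro w
    by_cases h : w = u
    · exact ⟨w, fun h' => absurd h h'⟩
    · obtain ⟨x, hx⟩ := exists_closer hT.connected u w h
      exact ⟨x, fun _ => hx⟩
  choose par hpar using hex
  have hinj : ∀ w w', w ≠ u → w' ≠ u → s(w, par w) = s(w', par w') → w = w' := by
    intro w w' hw hw' h
    rw [Sym2.eq_iff] at h
    rcases h with h | h
    · exact h.1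
    · exfalso
      have h1 := (hpar w hw).2
      have h2 := (hpar w' hw').2
      rw [h.2] at h1
      rw [← h.1] at h2
      omega
  refine ⟨par, fun w => G.dist w u, hpar, ?_, hinj⟩
  have hcard := hT.card_edgeFinset
  have hs := Finset.surjOn_of_injOn_of_card_le (s := Finset.univ.erase u) (t := G.edgeFinset)
    (fun w => s(w, par w))
    (by
      intro w hw
      have hw' : w ≠ u := by simpa using hw
      simpa using (hpar w hw').1)
    (by
      intro w hw w' hw' h
      exact hinj w w' (by simpa using hw) (by simpa using hw') h)
    (by
      rw [Finset.card_erase_of_mem (Finset.mem_univ u), Finset.card_univ]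
      omega)
  intro e he
  obtain ⟨w, hw, h⟩ := hs (show e ∈ (G.edgeFinset : Set (Sym2 V)) by simpa using he)
  exact ⟨w, by simpa using hw, h.symm⟩

lemma incidence_sum {G : SimpleGraph V} {u : V} {par : V → V} {d : V → ℕ}
    (h1 : ∀ w, w ≠ u → G.Adj w (par w) ∧ d (par w) < d w)
    (h2 : ∀ e ∈ G.edgeSet, ∃ w, w ≠ u ∧ e = s(w, par w))
    (h3 : ∀ w w', w ≠ u → w' ≠ u → s(w, par w) = s(w', par w') → w = w')
    (f : Sym2 V → ℕ) (w : V) :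
    ∑ e ∈ G.incidenceFinset w, f e
      = (if w = u then 0 else f s(w, par w)) + ∑ x ∈ chl u par w, f s(x, par x) := by
  have hA : G.incidenceFinset w
      = (Finset.univ.filter (fun x => x ≠ u ∧ (x = w ∨ par x = w))).image (fun x => s(x, par x)) := by
    ext e
    simp only [SimpleGraph.mem_incidenceFinset, SimpleGraph.incidenceSet, Set.mem_sep_iff,
      Finset.mem_image, Finset.mem_filter, Finset.mem_univ, true_and]
    constructor
    · rintro ⟨he, hwe⟩
      obtain ⟨x, hx, rfl⟩ := h2 e he
      rw [Sym2.mem_iff] at hwe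
      exact ⟨x, ⟨hx, hwe.imp Eq.symm Eq.symm⟩, rfl⟩
    · rintro ⟨x, ⟨hx, hxw⟩, rfl⟩
      refine ⟨(h1 x hx).1, ?_⟩
      rw [Sym2.mem_iff]
      exact hxw.imp Eq.symm Eq.symm
  rw [hA, Finset.sum_image]
  · by_cases hw : w = u
    · simp only [hw, if_true, zero_add]
      apply Finset.sum_congr _ (fun _ _ => rfl)
      ext x
      simp only [chl, Finset.mem_filter, Finset.mem_univ, true_and]
      tauto
    · simp only [hw, if_false]
      have hnm : w ∉ chl u par w := by
        rw [mem_chl]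
        rintro ⟨_, h⟩
        have := (h1 w hw).2
        rw [h] at this
        exact lt_irrefl _ this
      rw [← Finset.sum_insert (f := fun x => f s(x, par x)) hnm]
      apply Finset.sum_congr _ (fun _ _ => rfl)
      ext x
      simp only [chl, Finset.mem_filter, Finset.mem_univ, true_and, Finset.mem_insert]
      constructor
      · rintro ⟨h, h' | h'⟩
        · exact Or.inl h'
        · exact Or.inr ⟨h, h'⟩
      · rintro (h | h)
        · exact ⟨by rw [h]; exact hw, Or.inl h⟩
        · exact ⟨h.1, Or.inr h.2⟩
  · intro x hx y hy h
    simp only [Finset.coe_filter, Finset.mem_univ, true_and, Set.mem_ofPred_eq] at hx hy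
    exact h3 x y hx.1 hy.1 h

end tree

/-- Every tree containing exactly two vertices of degree at least 3
is antimagic. -/
theorem doubleSpider_tree_isAntimagic {V : Type*} [Fintype V] (G : SimpleGraph V)
    (hT : G.IsTree) (hbranch : {v : V | 3 ≤ G.degree v}.ncard = 2) :
    IsAntimagic G := by
  obtain ⟨u, v, huv, hset⟩ := Set.ncard_eq_two.1 hbranch
  have hu : 3 ≤ G.degree u := by
    have : u ∈ {v : V | 3 ≤ G.degree v} := by rw [hset]; simp
    exact this
  have hv : 3 ≤ G.degree v := by
    have : v ∈ {v : V | 3 ≤ G.degree v} := by rw [hset]; simp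
    exact this
  have ho : ∀ w, w ≠ u → w ≠ v → G.degree w ≤ 2 := by
    intro w h1 h2
    by_contra h
    have : w ∈ {v : V | 3 ≤ G.degree v} := by
      show 3 ≤ G.degree w
      omega
    rw [hset] at this
    simp [h1, h2] at this
  obtain ⟨par, d, h1, h2, h3⟩ := exists_par hT u
  have hdeg : ∀ w, G.degree w = (if w = u then 0 else 1) + (chl u par w).card := by
    intro w
    have := incidence_sum h1 h2 h3 (fun _ => 1) w
    simp only [Finset.sum_const, smul_eq_mul, mul_one] at this
    rw [← this, SimpleGraph.card_incidenceFinset_eq_degree]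
  obtain ⟨F, hF, hI⟩ := rooted u v huv par d (fun w hw => (h1 w hw).2)
    (by have := hdeg u; simp at this; omega)
    (by have := hdeg v; simp [huv.symm] at this; omega)
    (by
      intro w hw hw'
      have := hdeg w
      have := ho w hw hw'
      simp [hw] at *
      omega)
  have hN : Nonempty V := ⟨u⟩
  have hψ : Set.BijOn (fun w => s(w, par w)) {w | w ≠ u} G.edgeSet := by
    refine ⟨fun w hw => (h1 w hw).1, fun w hw w' hw' h => h3 w w' hw hw' h, ?_⟩
    intro e he
    obtain ⟨w, hw, h⟩ := h2 e he
    exact ⟨w, hw, h.symm⟩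
  let f : Sym2 V → ℕ := fun e => F (Function.invFunOn (fun w => s(w, par w)) {w | w ≠ u} e)
  have hf : ∀ w, w ≠ u → f s(w, par w) = F w := by
    intro w hw
    exact congrArg F (hψ.invOn_invFunOn.1 hw)
  refine ⟨f, ?_, ?_⟩
  · have hcard := hT.card_edgeFinset
    rw [show G.edgeFinset.card = Fintype.card V - 1 by omega]
    exact hF.comp (hψ.symm hψ.invOn_invFunOn.symm)
  · have : vertexSum G f = fun w => (if w = u then 0 else F w) + ∑ x ∈ chl u par w, F x := by
      funext w
      rw [vertexSum, incidence_sum h1 h2 h3]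
      congr 1
      · split_ifs with h
        · rfl
        · exact hf w h
      · apply Finset.sum_congr rfl
        intro x hx
        exact hf x (mem_chl.1 hx).1
    rw [this]
    exact hI

end
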